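/- arXiv:2012.04901 — 2 statements merged into one kernel-verified Lean document; each statement's English description precedes it below -/
import Mathlib

section
/- Fix an i.i.d. source X^n with per-letter distribution P_X on finite 𝒳, and an i.i.d. query distribution Q_{X̂}^n = Q_{X̂}^{⊗n} on 𝒳̂^n, with distortion d_n(x,x̂) = (1/n)Σ_i d(x_i, x̂_i) and level Δ. Then for every sequence x ∈ 𝒳^n, (−1/n) log Q_{X̂}^n({x̂ : d_n(x,x̂) ≤ Δ}) = R(P_x, Q_{X̂}|Δ) + o(1) uniformly over x ∈ 𝒳^n as n → ∞, where P_x denotes the empirical type of x. -/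
open scoped BigOperators

/-- Real-valued Kullback–Leibler divergence of finite probability vectors
(convention `0 log(0/q) = 0`; intended for use with positive `Q`). -/
noncomputable def klDivR {ι : Type*} [Fintype ι] (P Q : ι → ℝ) : ℝ :=
  ∑ x, if P x = 0 then 0 else P x * Real.log (P x / Q x)

/-- Mutual information `I(P, V)` (real-valued). -/
noncomputable def mutualInfoR {ι κ : Type*} [Fintype ι] [Fintype κ]
    (P : ι → ℝ) (V : ι → κ → ℝ) : ℝ :=
  klDivR (fun z : ι × κ => P z.1 * V z.1 z.2)
    (fun z : ι × κ => P z.1 * ∑ x, P x * V x z.2)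

/-- `V` is a channel (conditional distribution). -/
def IsChannel {ι κ : Type*} [Fintype κ] (V : ι → κ → ℝ) : Prop :=
  (∀ x y, 0 ≤ V x y) ∧ ∀ x, ∑ y, V x y = 1

/-- `R(Q_X, Q_{X̂} | Δ) = min_V [I(Q_X,V) + D(Q_X V ‖ Q_{X̂})]` over channels
with expected distortion at most `Δ`. -/
noncomputable def Rfun {ι κ : Type*} [Fintype ι] [Fintype κ]
    (QX : ι → ℝ) (QY : κ → ℝ) (d : ι → κ → ℝ) (Δ : ℝ) : ℝ :=
  sInf {r : ℝ | ∃ V : ι → κ → ℝ, IsChannel V ∧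
    (∑ x, ∑ y, QX x * V x y * d x y) ≤ Δ ∧
    r = mutualInfoR QX V + klDivR (fun y => ∑ x, QX x * V x y) QY}

/-- Empirical type of a sequence `x ∈ 𝒳^n`. -/
noncomputable def empType {𝒳 : Type*} [Fintype 𝒳] [DecidableEq 𝒳] {n : ℕ}
    (x : Fin n → 𝒳) : 𝒳 → ℝ :=
  fun a => ((Finset.univ.filter fun i => x i = a).card : ℝ) / n

/-- Probability under `Q^{⊗n}` of the distortion ball
`A_Δ(x) = {x̂ ∈ 𝒳̂^n : (1/n) Σ_i d(x_i, x̂_i) ≤ Δ}`. -/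
noncomputable def ballProbN {𝒳 𝒳' : Type*} [Fintype 𝒳'] (Q : 𝒳' → ℝ)
    (d : 𝒳 → 𝒳' → ℝ) (Δ : ℝ) {n : ℕ} (x : Fin n → 𝒳) : ℝ :=
  ∑ y : Fin n → 𝒳', if (∑ i, d (x i) (y i)) ≤ n * Δ then ∏ i, Q (y i) else 0

/-!
Writing `M = P · V` turns `I(P, V) + D(P V ‖ Q)` into `D(M ‖ P ⊗ Q)`, so `R` is the minimum of this
divergence over the joint weights `M` with first marginal `P` and distortion at most `Δ`. Everything
is homogeneous in `M`, hence `n R` is the same minimum taken over arrays of total mass `n` whose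
marginal is the array of letter counts of `x`.

The distortion of `y` depends only on the joint counts `N` of `(x, y)`, which take at most
`(n + 1) ^ |𝒳 × 𝒳'|` values. The `y` with joint counts `N` have total mass `exp (-D(N ‖ ·))` up to a
polynomial factor: from above by changing the measure to the channel `N(a, b) / N(a)`, from below by
counting with Stirling's formula the permutations that fix `x`. This gives the lower bound for the
exponent. For the upper bound, a real competitor `M` is rounded to an array of counts by rounding
down and moving the leftover mass in each row to a letter of least distortion, which keeps the
distortion constraint and raises the divergence only by `O(log n)`.
-/

section Logarithm

lemma mul_log_add_mul_log_le {s t : ℝ} (hs : 0 ≤ s) (ht : 0 ≤ t) :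
    s * Real.log s + t * Real.log t ≤ (s + t) * Real.log (s + t) := by
  have mul_log_le {a b : ℝ} (ha : 0 ≤ a) (hab : a ≤ b) : a * Real.log a ≤ a * Real.log b := by
    rcases ha.eq_or_lt with rfl | ha
    · simp
    · gcongr
  rw [add_mul]
  exact add_le_add (mul_log_le hs (by linarith)) (mul_log_le ht (by linarith))

lemma mul_log_sub_mul_log_le {s t : ℝ} (hs : 0 ≤ s) (hst : s ≤ t) :
    t * Real.log t - s * Real.log s ≤ (t - s) * (1 + Real.log t) := by
  rcases hs.eq_or_lt with rfl | hs
  · simp only [zero_mul, sub_zero]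
    linarith
  have ht : 0 < t := hs.trans_le hst
  have h : s * (Real.log t - Real.log s) ≤ t - s := by
    calc s * (Real.log t - Real.log s) = s * Real.log (t / s) := by rw [Real.log_div ht.ne' hs.ne']
      _ ≤ s * (t / s - 1) := by gcongr; exact Real.log_le_sub_one_of_pos (by positivity)
      _ = t - s := by field_simp
  linarith

lemma mul_log_le_mul_log_add {s t δ B : ℝ} (hs : 0 ≤ s) (ht : 0 ≤ t) (htB : t ≤ B) (hB : 1 ≤ B)
    (hst : |t - s| ≤ δ) :
    t * Real.log t ≤ s * Real.log s + (δ * (1 + Real.log B) + 1) := by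
  have hlogB : 0 ≤ Real.log B := Real.log_nonneg hB
  have hδ : 0 ≤ δ := (abs_nonneg _).trans hst
  rcases le_total s t with h | h
  · have hbound : (t - s) * (1 + Real.log t) ≤ δ * (1 + Real.log B) := by
      rcases ht.eq_or_lt with rfl | ht
      · have : s = 0 := le_antisymm h hs
        simp only [this, sub_self, zero_mul]
        positivity
      · have : Real.log t ≤ Real.log B := Real.log_le_log ht htB
        calc (t - s) * (1 + Real.log t) ≤ (t - s) * (1 + Real.log B) := by gcongr
          _ ≤ δ * (1 + Real.log B) := by gcongr; exact (le_abs_self _).trans hst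
    linarith [mul_log_sub_mul_log_le hs h]
  · have hsuper := mul_log_add_mul_log_le ht (sub_nonneg.2 h)
    rw [add_sub_cancel] at hsuper
    have : 0 ≤ δ * (1 + Real.log B) := by positivity
    linarith [Real.self_sub_one_le_mul_log (sub_nonneg.2 h)]

lemma mul_log_sub_le_log_factorial (k : ℕ) :
    k * Real.log k - k ≤ Real.log k.factorial := by
  rcases eq_or_ne k 0 with rfl | hk
  · simp
  have : 0 ≤ Real.log (2 * Real.pi) := Real.log_nonneg (by linarith [Real.pi_gt_three])
  linarith [Stirling.le_log_factorial_stirling hk, Real.log_natCast_nonneg k]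

lemma log_factorial_le (k : ℕ) :
    Real.log k.factorial ≤ k * Real.log k - k + (1 + Real.log (k + 1)) := by
  rcases k with _ | k
  · simp
  have hanti := Stirling.log_stirlingSeq'_antitone (Nat.zero_le k)
  have : 0 ≤ Real.log 2 := Real.log_nonneg one_le_two
  have hlog_succ : Real.log (k + 1 : ℕ) ≤ Real.log ((k + 1 : ℕ) + 1) := by gcongr; linarith
  simp only [Function.comp_apply, Nat.succ_eq_add_one, Stirling.log_stirlingSeq_formula] at hanti
  rw [Real.log_mul two_ne_zero (by positivity), Real.log_div (by positivity) (by positivity)]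
    at hanti
  norm_num at hanti hlog_succ ⊢
  have : 0 ≤ Real.log ((k : ℝ) + 1) := Real.log_nonneg (by linarith [k.cast_nonneg (α := ℝ)])
  linarith

lemma tendsto_one_add_log_succ_div_atTop :
    Filter.Tendsto (fun n : ℕ ↦ (1 + Real.log (n + 1)) / n) Filter.atTop (nhds 0) := by
  have hsucc : Filter.Tendsto (fun n : ℕ ↦ (n + 1 : ℝ)) Filter.atTop Filter.atTop :=
    Filter.tendsto_atTop_add_const_right _ _ tendsto_natCast_atTop_atTop
  have hpow (k : ℕ) := (Real.tendsto_pow_log_div_mul_add_atTop 1 (-1) k one_ne_zero).comp hsucc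
  simpa [Function.comp_def, add_div] using (hpow 0).add (hpow 1)

end Logarithm

section Divergence

variable {α β : Type*} [Fintype β] {P : α → ℝ} {Q : β → ℝ} {d : α → β → ℝ} {Δ t : ℝ}
  {M : α × β → ℝ}

lemma le_marginal (hM : ∀ z, 0 ≤ M z) (hMP : ∀ a, ∑ b, M (a, b) = P a) (z : α × β) :
    M z ≤ P z.1 :=
  hMP z.1 ▸ Finset.single_le_sum (f := fun b ↦ M (z.1, b)) (fun _ _ ↦ hM _) (Finset.mem_univ z.2)

variable [Fintype α]

lemma klDivR_eq_sum (P Q : α → ℝ) : klDivR P Q = ∑ x, P x * Real.log (P x / Q x) :=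
  Finset.sum_congr rfl fun x _ ↦ by split_ifs with h <;> simp [h]

lemma klDivR_smul {t : ℝ} (ht : t ≠ 0) (P Q : α → ℝ) :
    klDivR (t • P) (t • Q) = t * klDivR P Q := by
  simp only [klDivR_eq_sum, Finset.mul_sum, Pi.smul_apply, smul_eq_mul, mul_div_mul_left _ _ ht,
    mul_assoc]

lemma sum_sub_sum_le_klDivR {P Q : α → ℝ} (hP : ∀ x, 0 ≤ P x) (hQ : ∀ x, 0 ≤ Q x)
    (hPQ : ∀ x, Q x = 0 → P x = 0) : ∑ x, P x - ∑ x, Q x ≤ klDivR P Q := by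
  rw [klDivR_eq_sum, ← Finset.sum_sub_distrib]
  refine Finset.sum_le_sum fun x _ ↦ ?_
  rcases (hQ x).eq_or_lt with h | h
  · simp [← h, hPQ x h.symm]
  · calc P x - Q x = Q x * (P x / Q x - 1) := by field_simp
      _ ≤ Q x * (P x / Q x * Real.log (P x / Q x)) := by
        gcongr
        exact Real.self_sub_one_le_mul_log (div_nonneg (hP x) h.le)
      _ = P x * Real.log (P x / Q x) := by field_simp

/-- The divergence `D(M ‖ P ⊗ Q)` of a joint weight `M` from the product weight `P ⊗ Q`, the
quantity minimised in the rate function. Nothing is normalised, so that `M` may also be an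
array of counts. -/
noncomputable def prodDiv (P : α → ℝ) (Q : β → ℝ) (M : α × β → ℝ) : ℝ :=
  klDivR M fun z ↦ P z.1 * Q z.2

/-- The joint weights with first marginal `P` and total distortion at most `Δ`; for a probability
vector `P` these are the joint distributions `P · V` over which the rate function minimises. -/
def admissible (P : α → ℝ) (d : α → β → ℝ) (Δ : ℝ) : Set (α × β → ℝ) :=
  {M | (∀ z, 0 ≤ M z) ∧ (∀ a, ∑ b, M (a, b) = P a) ∧ ∑ z, M z * d z.1 z.2 ≤ Δ}

lemma natCast_mem_admissible_iff {c : α → ℕ} {N : α × β → ℕ} :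
    (fun z ↦ (N z : ℝ)) ∈ admissible (fun a ↦ (c a : ℝ)) d Δ
      ↔ (∀ a, ∑ b, N (a, b) = c a) ∧ ∑ z, N z * d z.1 z.2 ≤ Δ := by
  simp only [admissible, Set.mem_ofPred_eq, Nat.cast_nonneg, implies_true, true_and]
  norm_cast

lemma prodDiv_smul (ht : t ≠ 0) (P : α → ℝ) (Q : β → ℝ) (M : α × β → ℝ) :
    prodDiv (t • P) Q (t • M) = t * prodDiv P Q M := by
  rw [prodDiv, prodDiv, ← klDivR_smul ht]
  congr 1
  ext z
  simp only [Pi.smul_apply, smul_eq_mul, mul_assoc]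

lemma prodDiv_eq_sum_mul_log (hQ : ∀ b, 0 < Q b) (hM : ∀ z, 0 ≤ M z)
    (hMP : ∀ a, ∑ b, M (a, b) = P a) :
    prodDiv P Q M = ∑ z, M z * Real.log (M z) - ∑ a, P a * Real.log (P a)
      - ∑ z, M z * Real.log (Q z.2) := by
  have hP : ∑ a, P a * Real.log (P a) = ∑ z, M z * Real.log (P z.1) := by
    simp only [Fintype.sum_prod_type, ← Finset.sum_mul, hMP]
  rw [prodDiv, klDivR_eq_sum, hP, ← Finset.sum_sub_distrib, ← Finset.sum_sub_distrib]
  refine Finset.sum_congr rfl fun z _ ↦ ?_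
  rcases (hM z).eq_or_lt with h | h
  · simp [← h]
  · have hPz : P z.1 ≠ 0 := (h.trans_le (le_marginal hM hMP z)).ne'
    have hQz := (hQ z.2).ne'
    rw [Real.log_div h.ne' (mul_ne_zero hPz hQz), Real.log_mul hPz hQz]
    ring

lemma prodDiv_le_prodDiv_add {M' : α × β → ℝ} {Δ' B δ : ℝ} (hQ : ∀ b, 0 < Q b)
    (hM : M ∈ admissible P d Δ) (hM' : M' ∈ admissible P d Δ') (hB : 1 ≤ B) (hPB : ∀ a, P a ≤ B)
    (hδ : ∀ z, |M' z - M z| ≤ δ) :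
    prodDiv P Q M'
      ≤ prodDiv P Q M + ∑ z : α × β, (δ * (1 + Real.log B) + 1 + δ * |Real.log (Q z.2)|) := by
  have hentropy : ∑ z, M' z * Real.log (M' z)
      ≤ ∑ z, (M z * Real.log (M z) + (δ * (1 + Real.log B) + 1)) :=
    Finset.sum_le_sum fun z _ ↦ mul_log_le_mul_log_add (hM.1 z) (hM'.1 z)
      ((le_marginal hM'.1 hM'.2.1 z).trans (hPB z.1)) hB (hδ z)
  have hcross : ∑ z, M z * Real.log (Q z.2)
      ≤ ∑ z, (M' z * Real.log (Q z.2) + δ * |Real.log (Q z.2)|) := by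
    refine Finset.sum_le_sum fun z _ ↦ ?_
    have := (neg_le_abs ((M' z - M z) * Real.log (Q z.2))).trans_eq (abs_mul _ _)
    nlinarith [mul_le_mul_of_nonneg_right (hδ z) (abs_nonneg (Real.log (Q z.2)))]
  rw [Finset.sum_add_distrib] at hentropy hcross ⊢
  rw [prodDiv_eq_sum_mul_log hQ hM.1 hM.2.1, prodDiv_eq_sum_mul_log hQ hM'.1 hM'.2.1]
  linarith

lemma sum_sub_mul_sum_le_prodDiv (hQ : ∀ b, 0 < Q b) (hM : M ∈ admissible P d Δ) :
    ∑ a, P a - (∑ a, P a) * ∑ b, Q b ≤ prodDiv P Q M := by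
  obtain ⟨hM0, hMP, -⟩ := hM
  have hP (a : α) : 0 ≤ P a := hMP a ▸ Finset.sum_nonneg fun b _ ↦ hM0 (a, b)
  have hsum : ∑ z, M z = ∑ a, P a := by simp only [Fintype.sum_prod_type, hMP]
  rw [← hsum, hsum, Fintype.sum_mul_sum, ← Fintype.sum_prod_type', ← hsum]
  refine sum_sub_sum_le_klDivR hM0 (fun z ↦ mul_nonneg (hP z.1) (hQ z.2).le) fun z hz ↦ ?_
  have hPz : P z.1 = 0 := (mul_eq_zero.1 hz).resolve_right (hQ z.2).ne'
  exact le_antisymm (hPz ▸ le_marginal hM0 hMP z) (hM0 z)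

lemma mutualInfoR_add_klDivR {V : α → β → ℝ} (hP : ∀ a, 0 ≤ P a) (hQ : ∀ b, 0 < Q b)
    (hV : ∀ a b, 0 ≤ V a b) :
    mutualInfoR P V + klDivR (fun b ↦ ∑ a, P a * V a b) Q
      = prodDiv P Q fun z ↦ P z.1 * V z.1 z.2 := by
  set W : β → ℝ := fun b ↦ ∑ a, P a * V a b with hW
  have hkl : klDivR W Q = ∑ z : α × β, P z.1 * V z.1 z.2 * Real.log (W z.2 / Q z.2) := by
    simp only [klDivR_eq_sum, Fintype.sum_prod_type_right, ← Finset.sum_mul, hW]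
  rw [mutualInfoR, prodDiv, hkl, klDivR_eq_sum, klDivR_eq_sum, ← Finset.sum_add_distrib]
  refine Finset.sum_congr rfl fun z _ ↦ ?_
  change P z.1 * V z.1 z.2 * Real.log (P z.1 * V z.1 z.2 / (P z.1 * W z.2)) + _ = _
  have hPV (a : α) : 0 ≤ P a * V a z.2 := mul_nonneg (hP a) (hV a z.2)
  rcases (hPV z.1).eq_or_lt with h | h
  · simp [← h]
  · have hWz : 0 < W z.2 :=
      h.trans_le (Finset.single_le_sum (f := fun a ↦ P a * V a z.2) (fun a _ ↦ hPV a)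
        (Finset.mem_univ z.1))
    have hPz : 0 < P z.1 := (hP z.1).lt_of_ne' (left_ne_zero_of_mul h.ne')
    have hQz := hQ z.2
    rw [← mul_add, ← Real.log_mul (div_pos h (mul_pos hPz hWz)).ne' (div_pos hWz hQz).ne']
    congr 2
    field_simp

lemma mul_channel_mem_admissible {V : α → β → ℝ} (hP : ∀ a, 0 ≤ P a) (hV : IsChannel V)
    (hd : ∑ a, ∑ b, P a * V a b * d a b ≤ Δ) :
    (fun z ↦ P z.1 * V z.1 z.2) ∈ admissible P d Δ :=
  ⟨fun z ↦ mul_nonneg (hP z.1) (hV.1 z.1 z.2),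
    fun a ↦ by simp only [← Finset.mul_sum, hV.2, mul_one], by rwa [Fintype.sum_prod_type]⟩

lemma exists_channel_of_mem_admissible [Nonempty β] (hM : M ∈ admissible P d Δ) :
    ∃ V, IsChannel V ∧ M = fun z ↦ P z.1 * V z.1 z.2 := by
  classical
  obtain ⟨hM0, hMP, -⟩ := hM
  have hP (a : α) : 0 ≤ P a := hMP a ▸ Finset.sum_nonneg fun b _ ↦ hM0 (a, b)
  obtain ⟨b₀⟩ := ‹Nonempty β›
  refine ⟨fun a b ↦ if P a = 0 then (if b = b₀ then 1 else 0) else M (a, b) / P a,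
    ⟨fun a b ↦ ?_, fun a ↦ ?_⟩, funext fun z ↦ ?_⟩ <;> dsimp only
  · split_ifs
    exacts [zero_le_one, le_rfl, div_nonneg (hM0 _) (hP a)]
  · split_ifs with h
    · simp
    · rw [← Finset.sum_div, hMP, div_self h]
  · by_cases h : P z.1 = 0
    · rw [h, zero_mul]
      exact le_antisymm (h ▸ le_marginal hM0 hMP z) (hM0 z)
    · rw [if_neg h, mul_div_cancel₀ _ h]

lemma Rfun_eq_sInf_prodDiv [Nonempty β] (hP : ∀ a, 0 ≤ P a) (hQ : ∀ b, 0 < Q b) :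
    Rfun P Q d Δ = sInf (prodDiv P Q '' admissible P d Δ) := by
  rw [Rfun]
  congr 1
  ext r
  constructor
  · rintro ⟨V, hV, hd, rfl⟩
    exact ⟨_, mul_channel_mem_admissible hP hV hd, (mutualInfoR_add_klDivR hP hQ hV.1).symm⟩
  · rintro ⟨M, hM, rfl⟩
    obtain ⟨V, hV, rfl⟩ := exists_channel_of_mem_admissible hM
    refine ⟨V, hV, ?_, (mutualInfoR_add_klDivR hP hQ hV.1).symm⟩
    rw [← Fintype.sum_prod_type']
    exact hM.2.2

lemma Rfun_le_prodDiv [Nonempty β] (hP : ∀ a, 0 ≤ P a) (hQ : ∀ b, 0 < Q b)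
    (hM : M ∈ admissible P d Δ) : Rfun P Q d Δ ≤ prodDiv P Q M := by
  rw [Rfun_eq_sInf_prodDiv hP hQ]
  refine csInf_le ⟨∑ a, P a - (∑ a, P a) * ∑ b, Q b, ?_⟩ ⟨M, hM, rfl⟩
  rintro _ ⟨M', hM', rfl⟩
  exact sum_sub_mul_sum_le_prodDiv hQ hM'

lemma smul_mem_admissible (ht : 0 ≤ t) (hM : M ∈ admissible P d Δ) :
    t • M ∈ admissible (t • P) d (t * Δ) := by
  refine ⟨fun z ↦ mul_nonneg ht (hM.1 z), fun a ↦ ?_, ?_⟩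
  · simp only [Pi.smul_apply, smul_eq_mul, ← Finset.mul_sum, hM.2.1]
  · simp only [Pi.smul_apply, smul_eq_mul, mul_assoc, ← Finset.mul_sum]
    exact mul_le_mul_of_nonneg_left hM.2.2 ht

lemma admissible_smul (ht : 0 < t) (P : α → ℝ) (d : α → β → ℝ) (Δ : ℝ) :
    admissible (t • P) d (t * Δ) = (t • ·) '' admissible P d Δ := by
  refine Set.Subset.antisymm (fun M hM ↦ ⟨t⁻¹ • M, ?_, smul_inv_smul₀ ht.ne' M⟩) ?_
  · simpa [smul_smul, inv_mul_cancel₀ ht.ne', inv_mul_cancel_left₀ ht.ne'] using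
      smul_mem_admissible (inv_nonneg.2 ht.le) hM
  · rintro _ ⟨M, hM, rfl⟩
    exact smul_mem_admissible ht.le hM

lemma Rfun_smul [Nonempty β] (hP : ∀ a, 0 ≤ P a) (hQ : ∀ b, 0 < Q b) (ht : 0 < t) :
    Rfun (t • P) Q d (t * Δ) = t * Rfun P Q d Δ := by
  have htP (a : α) : 0 ≤ (t • P) a := mul_nonneg ht.le (hP a)
  rw [Rfun_eq_sInf_prodDiv hP hQ, Rfun_eq_sInf_prodDiv htP hQ, admissible_smul ht, Set.image_image,
    ← smul_eq_mul, ← Real.sInf_smul_of_nonneg ht.le, ← Set.image_smul, Set.image_image]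
  simp only [prodDiv_smul ht.ne', smul_eq_mul]

end Divergence

section Types

variable {ι κ α β : Type*} [Fintype ι] [Fintype κ] [DecidableEq α]

/-- The number of occurrences of the letter `a` in the sequence `x`, that is, the unnormalised
type of `x`. -/
def typeCount (x : ι → α) (a : α) : ℕ :=
  Finset.card {i | x i = a}

lemma typeCount_le_card (x : ι → α) (a : α) : typeCount x a ≤ Fintype.card ι :=
  Finset.card_le_univ _

lemma typeCount_pos (x : ι → α) (i : ι) : 0 < typeCount x (x i) :=
  Finset.card_pos.2 ⟨i, by simp⟩

lemma typeCount_comp_equiv (x : κ → α) (e : ι ≃ κ) : typeCount (x ∘ e) = typeCount x :=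
  funext fun _ ↦ Finset.card_equiv e (by simp)

lemma exists_equiv_of_typeCount_eq {x : ι → α} {x' : κ → α} (h : typeCount x = typeCount x') :
    ∃ e : ι ≃ κ, x' ∘ e = x := by
  have e (a : α) : {i // x i = a} ≃ {k // x' k = a} :=
    Fintype.equivOfCardEq (by simpa only [Fintype.card_subtype, typeCount] using congr_fun h a)
  exact ⟨Equiv.ofFiberEquiv e, funext (Equiv.ofFiberEquiv_map e)⟩

lemma smul_empType [Fintype α] {n : ℕ} (hn : n ≠ 0) (x : Fin n → α) :
    (n : ℝ) • empType x = fun a ↦ (typeCount x a : ℝ) := by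
  ext a
  simp only [Pi.smul_apply, smul_eq_mul, empType, typeCount]
  field_simp

lemma sum_comp_eq_sum_typeCount_mul [Fintype α] (x : ι → α) (f : α → ℝ) :
    ∑ i, f (x i) = ∑ a, typeCount x a * f a := by
  rw [← Finset.sum_fiberwise' Finset.univ x f]
  simp only [Finset.sum_const, nsmul_eq_mul, typeCount]

lemma prod_comp_eq_exp_sum_typeCount [Fintype α] {x : ι → α} {f : α → ℝ} (hf : ∀ i, 0 < f (x i)) :
    ∏ i, f (x i) = Real.exp (∑ a, typeCount x a * Real.log (f a)) := by
  rw [← sum_comp_eq_sum_typeCount_mul x fun a ↦ Real.log (f a), Real.exp_sum]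
  exact Finset.prod_congr rfl fun i _ ↦ (Real.exp_log (hf i)).symm

lemma sum_typeCount_prod [Fintype β] [DecidableEq β] (x : ι → α) (y : ι → β) (a : α) :
    ∑ b, typeCount (Function.prod x y) (a, b) = typeCount x a := by
  rw [typeCount, Finset.card_eq_sum_card_fiberwise (f := y) (t := Finset.univ) (by simp)]
  simp only [typeCount, Finset.filter_filter, Function.prod, Prod.mk.injEq]

lemma typeCount_sigma_fst [Fintype α] (N : α → ℕ) :
    typeCount (Sigma.fst : (Σ a, Fin (N a)) → α) = N := by
  ext a
  rw [typeCount, ← Fintype.card_subtype, Fintype.card_congr (Equiv.sigmaSubtype a),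
    Fintype.card_fin]

lemma exists_typeCount_prod_eq [Finite α] [Fintype β] [DecidableEq β] {x : ι → α}
    {N : α × β → ℕ} (hN : ∀ a, ∑ b, N (a, b) = typeCount x a) :
    ∃ y : ι → β, typeCount (Function.prod x y) = N := by
  cases nonempty_fintype α
  let s : (Σ z, Fin (N z)) → α × β := Sigma.fst
  have hs : typeCount s = N := typeCount_sigma_fst N
  have hx : typeCount x = typeCount (Prod.fst ∘ s) := funext fun a ↦ calc
    typeCount x a = ∑ b, typeCount s (a, b) := by rw [← hN, hs]
    _ = typeCount (Prod.fst ∘ s) a := sum_typeCount_prod (Prod.fst ∘ s) (Prod.snd ∘ s) a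
  obtain ⟨e, he⟩ := exists_equiv_of_typeCount_eq hx
  refine ⟨Prod.snd ∘ s ∘ e, ?_⟩
  calc typeCount (Function.prod x (Prod.snd ∘ s ∘ e)) = typeCount (s ∘ e) := by rw [← he]; rfl
    _ = N := (typeCount_comp_equiv s e).trans hs

section Perm

variable [DecidableEq ι]

lemma prod_factorial_typeCount [Fintype α] (x : ι → α) :
    ∏ a, (typeCount x a).factorial = Finset.card {σ : Equiv.Perm ι | x ∘ σ = x} := by
  rw [← Fintype.card_subtype, DomMulAct.stabilizer_card]
  simp only [Fintype.card_subtype, typeCount]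

lemma card_comp_perm_eq_le (x x' : ι → α) :
    Finset.card {σ : Equiv.Perm ι | x ∘ σ = x'} ≤ Finset.card {σ : Equiv.Perm ι | x ∘ σ = x} := by
  rcases Finset.eq_empty_or_nonempty {σ : Equiv.Perm ι | x ∘ σ = x'} with h | ⟨τ, hτ⟩
  · simp [h]
  have hτ' : x' ∘ ⇑τ⁻¹ = x := by
    rw [← (Finset.mem_filter_univ _).1 hτ]
    ext i
    simp
  refine Finset.card_le_card_of_injOn (· * τ⁻¹) (fun σ hσ ↦ ?_) (mul_left_injective _).injOn
  rw [Finset.mem_coe, Finset.mem_filter_univ] at hσ ⊢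
  rw [Equiv.Perm.coe_mul, ← Function.comp_assoc, hσ, hτ']

end Perm

variable [DecidableEq ι] [Fintype α] [Fintype β] [DecidableEq β] {x : ι → α} {N : α × β → ℕ}

/-- The sequences `y` having joint type `N` with `x`; this is the `V`-shell of `x` for the channel
`V = N / typeCount x`. -/
def typeClass (x : ι → α) (N : α × β → ℕ) : Finset (ι → β) :=
  {y | typeCount (Function.prod x y) = N}

lemma mem_typeClass {y : ι → β} : y ∈ typeClass x N ↔ typeCount (Function.prod x y) = N :=
  Finset.mem_filter_univ y

lemma typeClass_nonempty (hN : ∀ a, ∑ b, N (a, b) = typeCount x a) : (typeClass x N).Nonempty :=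
  (exists_typeCount_prod_eq hN).imp fun _ ↦ mem_typeClass.2

lemma comp_perm_mem_typeClass {y : ι → β} {σ : Equiv.Perm ι} (hσ : x ∘ σ = x)
    (hy : y ∈ typeClass x N) : y ∘ σ ∈ typeClass x N := by
  rw [mem_typeClass] at hy ⊢
  calc typeCount (Function.prod x (y ∘ σ)) = typeCount (Function.prod x y ∘ σ) := by
        nth_rw 1 [← hσ]
        rfl
    _ = N := (typeCount_comp_equiv _ σ).trans hy

-- The permutations fixing `x` act on the class, and the stabiliser of `y` under this action
-- consists of the permutations fixing `(x, y)`.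
lemma prod_factorial_le_card_typeClass_mul (hN : ∀ a, ∑ b, N (a, b) = typeCount x a) :
    ∏ a, (typeCount x a).factorial ≤ (∏ z, (N z).factorial) * (typeClass x N).card := by
  obtain ⟨y, hy⟩ := typeClass_nonempty hN
  rw [prod_factorial_typeCount, ← mem_typeClass.1 hy, prod_factorial_typeCount]
  refine Finset.card_le_mul_card_image_of_maps_to (f := fun σ : Equiv.Perm ι ↦ y ∘ σ)
    (fun σ hσ ↦ comp_perm_mem_typeClass (Finset.mem_filter.1 hσ).2 (mem_typeClass.2 rfl)) _
    fun y' _ ↦ ?_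
  rw [Finset.filter_filter]
  refine le_of_eq_of_le ?_ (card_comp_perm_eq_le (Function.prod x y) (Function.prod x y'))
  simp only [funext_iff, Function.comp_apply, Function.prod, Prod.mk.injEq, forall_and]

end Types

section Mass

variable {ι α β : Type*} [Fintype ι] [DecidableEq ι] [DecidableEq α] [Fintype β] {x : ι → α}
  {N : α × β → ℕ} {Q : β → ℝ}

lemma sum_prod_div_typeCount (hN : ∀ a, ∑ b, N (a, b) = typeCount x a) :
    ∑ y : ι → β, ∏ i, ((N (x i, y i) : ℝ) / typeCount x (x i)) = 1 := by
  rw [← Fintype.prod_sum fun i b ↦ (N (x i, b) : ℝ) / typeCount x (x i)]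
  refine Finset.prod_eq_one fun i _ ↦ ?_
  rw [← Finset.sum_div, ← Nat.cast_sum, hN, div_self (mod_cast (typeCount_pos x i).ne')]

variable [Fintype α] [DecidableEq β]

lemma prod_eq_exp_of_mem_typeClass {y : ι → β} (hQ : ∀ b, 0 < Q b) (hy : y ∈ typeClass x N) :
    ∏ i, Q (y i) = Real.exp (∑ z, N z * Real.log (Q z.2)) := by
  rw [← mem_typeClass.1 hy]
  exact prod_comp_eq_exp_sum_typeCount (x := Function.prod x y) (f := fun z ↦ Q z.2) fun _ ↦ hQ _

lemma prod_div_eq_exp_prodDiv_mul_prod {y : ι → β} (hQ : ∀ b, 0 < Q b) (hy : y ∈ typeClass x N) :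
    ∏ i, ((N (x i, y i) : ℝ) / typeCount x (x i))
      = Real.exp (prodDiv (fun a ↦ (typeCount x a : ℝ)) Q fun z ↦ (N z : ℝ)) * ∏ i, Q (y i) := by
  obtain rfl := mem_typeClass.1 hy
  have hpos (i : ι) : 0 < (typeCount (Function.prod x y) (x i, y i) : ℝ)
      / (typeCount x (x i) * Q (y i)) :=
    div_pos (mod_cast typeCount_pos (Function.prod x y) i)
      (mul_pos (mod_cast typeCount_pos x i) (hQ _))
  rw [prodDiv, klDivR_eq_sum, ← prod_comp_eq_exp_sum_typeCount (x := Function.prod x y) hpos,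
    ← Finset.prod_mul_distrib]
  refine Finset.prod_congr rfl fun i _ ↦ ?_
  have hQi := (hQ (y i)).ne'
  simp only [Function.prod]
  field_simp

-- Under the channel `N / typeCount x` the class has probability at most `1`, and changing to the
-- measure `Q` multiplies the weight of each of its members by `exp (-prodDiv)`.
lemma sum_typeClass_le_exp_neg_prodDiv (hQ : ∀ b, 0 < Q b)
    (hN : ∀ a, ∑ b, N (a, b) = typeCount x a) :
    ∑ y ∈ typeClass x N, ∏ i, Q (y i)
      ≤ Real.exp (-prodDiv (fun a ↦ (typeCount x a : ℝ)) Q fun z ↦ (N z : ℝ)) := by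
  rw [Real.exp_neg, ← one_div, le_div_iff₀' (Real.exp_pos _), Finset.mul_sum]
  calc ∑ y ∈ typeClass x N, Real.exp _ * ∏ i, Q (y i)
      = ∑ y ∈ typeClass x N, ∏ i, ((N (x i, y i) : ℝ) / typeCount x (x i)) :=
        Finset.sum_congr rfl fun y hy ↦ (prod_div_eq_exp_prodDiv_mul_prod hQ hy).symm
    _ ≤ ∑ y : ι → β, ∏ i, ((N (x i, y i) : ℝ) / typeCount x (x i)) :=
        Finset.sum_le_univ_sum_of_nonneg fun y ↦ by positivity
    _ = 1 := sum_prod_div_typeCount hN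

lemma sum_log_factorial_le (hN : ∀ a, ∑ b, N (a, b) = typeCount x a) :
    ∑ a, Real.log (typeCount x a).factorial
      ≤ ∑ z, Real.log (N z).factorial + Real.log (typeClass x N).card := by
  have hfact (k : ℕ) : (k.factorial : ℝ) ≠ 0 := mod_cast k.factorial_ne_zero
  rw [← Real.log_prod fun a _ ↦ hfact _, ← Real.log_prod fun z _ ↦ hfact _,
    ← Real.log_mul (Finset.prod_ne_zero_iff.2 fun z _ ↦ hfact _)
      (mod_cast (typeClass_nonempty hN).card_ne_zero)]
  refine Real.log_le_log (Finset.prod_pos fun a _ ↦ by positivity) ?_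
  exact_mod_cast prod_factorial_le_card_typeClass_mul hN

lemma le_log_card_typeClass (hN : ∀ a, ∑ b, N (a, b) = typeCount x a) :
    ∑ a, typeCount x a * Real.log (typeCount x a) - ∑ z, N z * Real.log (N z)
      - Fintype.card (α × β) * (1 + Real.log (Fintype.card ι + 1))
      ≤ Real.log (typeClass x N).card := by
  have hsum : ∑ z, (N z : ℝ) = ∑ a, (typeCount x a : ℝ) := by
    simp only [Fintype.sum_prod_type, ← Nat.cast_sum, hN]
  have hN_le (z : α × β) : N z ≤ Fintype.card ι := by
    obtain ⟨y, rfl⟩ := exists_typeCount_prod_eq hN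
    exact typeCount_le_card _ z
  have hlower : ∑ a, typeCount x a * Real.log (typeCount x a) - ∑ a, (typeCount x a : ℝ)
      ≤ ∑ a, Real.log (typeCount x a).factorial := by
    rw [← Finset.sum_sub_distrib]
    exact Finset.sum_le_sum fun a _ ↦ mul_log_sub_le_log_factorial _
  have hupper : ∑ z, Real.log (N z).factorial
      ≤ ∑ z, N z * Real.log (N z) - ∑ z, (N z : ℝ)
        + Fintype.card (α × β) * (1 + Real.log (Fintype.card ι + 1)) := by
    rw [← Finset.sum_sub_distrib, ← nsmul_eq_mul, ← Finset.card_univ, ← Finset.sum_const,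
      ← Finset.sum_add_distrib]
    refine Finset.sum_le_sum fun z _ ↦ (log_factorial_le _).trans ?_
    gcongr
    exact hN_le z
  linarith [sum_log_factorial_le hN]

lemma exp_neg_prodDiv_sub_le_sum_typeClass (hQ : ∀ b, 0 < Q b)
    (hN : ∀ a, ∑ b, N (a, b) = typeCount x a) :
    Real.exp (-prodDiv (fun a ↦ (typeCount x a : ℝ)) Q (fun z ↦ (N z : ℝ))
      - Fintype.card (α × β) * (1 + Real.log (Fintype.card ι + 1)))
      ≤ ∑ y ∈ typeClass x N, ∏ i, Q (y i) := by
  have hcard : 0 < ((typeClass x N).card : ℝ) := mod_cast (typeClass_nonempty hN).card_pos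
  rw [Finset.sum_congr rfl fun y hy ↦ prod_eq_exp_of_mem_typeClass hQ hy, Finset.sum_const,
    nsmul_eq_mul, ← Real.exp_log hcard, ← Real.exp_add, Real.exp_le_exp,
    prodDiv_eq_sum_mul_log hQ (fun z ↦ (N z).cast_nonneg) fun a ↦ mod_cast hN a]
  linarith [le_log_card_typeClass hN]

end Mass

section Rounding

variable {α β : Type*} [Fintype β] [Nonempty β]

-- Round down and give the leftover mass to a cheapest letter.
lemma exists_nat_rounding {v : β → ℝ} (hv : ∀ b, 0 ≤ v b) {k : ℕ} (hk : ∑ b, v b = k) (w : β → ℝ) :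
    ∃ u : β → ℕ, ∑ b, u b = k ∧ ∑ b, u b * w b ≤ ∑ b, v b * w b ∧
      ∀ b, |u b - v b| ≤ Fintype.card β := by
  classical
  obtain ⟨b₀, hb₀⟩ := Finite.exists_min w
  have hfloor (b : β) : (⌊v b⌋₊ : ℝ) ≤ v b := Nat.floor_le (hv b)
  have hfract (b : β) : v b - ⌊v b⌋₊ ≤ 1 := by linarith [Nat.lt_floor_add_one (v b)]
  obtain ⟨r, hr⟩ : ∃ r, k = ∑ b, ⌊v b⌋₊ + r := by
    refine Nat.exists_eq_add_of_le ?_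
    rify
    exact hk ▸ Finset.sum_le_sum fun b _ ↦ hfloor b
  have hr_eq : (r : ℝ) = ∑ b, (v b - ⌊v b⌋₊) := by
    rw [Finset.sum_sub_distrib, hk, hr]
    push_cast
    ring
  have hr_le : (r : ℝ) ≤ Fintype.card β := by
    rw [hr_eq]
    exact (Finset.sum_le_card_nsmul _ _ 1 fun b _ ↦ hfract b).trans_eq (by simp)
  have hcard : (1 : ℝ) ≤ Fintype.card β := mod_cast Fintype.card_pos
  refine ⟨fun b ↦ ⌊v b⌋₊ + if b = b₀ then r else 0, ?_, ?_, fun b ↦ ?_⟩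
  · simp [Finset.sum_add_distrib, hr]
  · have hcost : r * w b₀ ≤ ∑ b, (v b - ⌊v b⌋₊) * w b := by
      rw [hr_eq, Finset.sum_mul]
      exact Finset.sum_le_sum fun b _ ↦
        mul_le_mul_of_nonneg_left (hb₀ b) (sub_nonneg.2 (hfloor b))
    simp only [sub_mul, Finset.sum_sub_distrib] at hcost
    simp only [Nat.cast_add, Nat.cast_ite, Nat.cast_zero, add_mul, Finset.sum_add_distrib, ite_mul,
      zero_mul, Finset.sum_ite_eq', Finset.mem_univ, if_true]
    linarith
  · have : (0 : ℝ) ≤ r := r.cast_nonneg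
    push_cast
    split_ifs <;> rw [abs_le] <;> constructor <;> linarith [hfloor b, hfract b]

lemma exists_nat_mem_admissible [Fintype α] {c : α → ℕ} {d : α → β → ℝ} {Δ : ℝ} {M : α × β → ℝ}
    (hM : M ∈ admissible (fun a ↦ (c a : ℝ)) d Δ) :
    ∃ N : α × β → ℕ, (fun z ↦ (N z : ℝ)) ∈ admissible (fun a ↦ (c a : ℝ)) d Δ ∧
      ∀ z, |N z - M z| ≤ Fintype.card β := by
  obtain ⟨hM0, hMc, hMd⟩ := hM
  choose u hu_sum hu_cost hu_near using fun a ↦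
    exists_nat_rounding (fun b ↦ hM0 (a, b)) (hMc a) (d a)
  refine ⟨fun z ↦ u z.1 z.2, natCast_mem_admissible_iff.2 ⟨hu_sum, ?_⟩,
    fun z ↦ hu_near z.1 z.2⟩
  rw [Fintype.sum_prod_type] at hMd ⊢
  exact (Finset.sum_le_sum fun a _ ↦ hu_cost a).trans hMd

end Rounding

section Ball

variable {α β : Type*} [Fintype β] {Q : β → ℝ} {d : α → β → ℝ} {Δ : ℝ} {n : ℕ} {x : Fin n → α}

lemma ballProbN_eq_sum_filter (Q : β → ℝ) (d : α → β → ℝ) (Δ : ℝ) (x : Fin n → α) :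
    ballProbN Q d Δ x = ∑ y : Fin n → β with ∑ i, d (x i) (y i) ≤ n * Δ, ∏ i, Q (y i) := by
  rw [ballProbN, Finset.sum_filter]

lemma ballProbN_pos (hQ : ∀ b, 0 < Q b) {y : Fin n → β} (hy : ∑ i, d (x i) (y i) ≤ n * Δ) :
    0 < ballProbN Q d Δ x := by
  rw [ballProbN_eq_sum_filter]
  exact Finset.sum_pos (fun y _ ↦ Finset.prod_pos fun i _ ↦ hQ _)
    ⟨y, (Finset.mem_filter_univ y).2 hy⟩

/-- The factor of `1 + log (n + 1)` in the error of the exponent. Each entry of a joint type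
contributes `1` through Stirling's formula, and the rest through rounding. -/
noncomputable def errorConst (α : Type*) [Fintype α] (Q : β → ℝ) : ℝ :=
  ∑ z : α × β, (2 + Fintype.card β * (1 + |Real.log (Q z.2)|))

variable [Fintype α]

lemma card_le_errorConst : Fintype.card (α × β) ≤ errorConst α Q := by
  rw [← Finset.card_univ, ← nsmul_one, errorConst]
  refine Finset.card_nsmul_le_sum _ _ _ fun z _ ↦ ?_
  have : 0 ≤ Fintype.card β * (1 + |Real.log (Q z.2)|) := by positivity
  linarith

lemma sum_add_card_mul_le_errorConst_mul {L : ℝ} (hL : 1 ≤ L) :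
    ∑ z : α × β, (Fintype.card β * L + 1 + Fintype.card β * |Real.log (Q z.2)|)
      + Fintype.card (α × β) * L ≤ errorConst α Q * L := by
  rw [← nsmul_eq_mul (Fintype.card (α × β)), ← Finset.card_univ (α := α × β), ← Finset.sum_const,
    ← Finset.sum_add_distrib, errorConst, Finset.sum_mul]
  refine Finset.sum_le_sum fun z _ ↦ ?_
  have : Fintype.card β * |Real.log (Q z.2)| ≤ Fintype.card β * |Real.log (Q z.2)| * L :=
    le_mul_of_one_le_right (by positivity) hL
  linarith

variable [DecidableEq α]

lemma typeCount_prod_mem_admissible_iff {ι : Type*} [Fintype ι] [DecidableEq β] {x : ι → α}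
    {y : ι → β} :
    (fun z ↦ (typeCount (Function.prod x y) z : ℝ)) ∈ admissible (fun a ↦ (typeCount x a : ℝ)) d Δ
      ↔ ∑ i, d (x i) (y i) ≤ Δ := by
  have hcost := sum_comp_eq_sum_typeCount_mul (Function.prod x y) fun z ↦ d z.1 z.2
  rw [natCast_mem_admissible_iff, ← hcost]
  exact and_iff_right (sum_typeCount_prod x y)

lemma ballProbN_le [Nonempty β] (hQ : ∀ b, 0 < Q b) :
    ballProbN Q d Δ x ≤ (n + 1 : ℝ) ^ Fintype.card (α × β)
      * Real.exp (-Rfun (fun a ↦ (typeCount x a : ℝ)) Q d (n * Δ)) := by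
  classical
  have hcount (y : Fin n → β) :
      typeCount (Function.prod x y) ∈ Fintype.piFinset fun _ ↦ Finset.range (n + 1) :=
    Fintype.mem_piFinset.2 fun z ↦ Finset.mem_range_succ_iff.2 <|
      (typeCount_le_card _ z).trans_eq (Fintype.card_fin n)
  rw [ballProbN_eq_sum_filter, ← Finset.sum_fiberwise_of_maps_to fun y _ ↦ hcount y]
  refine (Finset.sum_le_card_nsmul _ _
    (Real.exp (-Rfun (fun a ↦ (typeCount x a : ℝ)) Q d (n * Δ))) fun N _ ↦ ?_).trans_eq (by simp)
  rw [Finset.filter_filter]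
  rcases Finset.eq_empty_or_nonempty {y : Fin n → β |
    ∑ i, d (x i) (y i) ≤ n * Δ ∧ typeCount (Function.prod x y) = N} with h | ⟨y, hy⟩
  · simp only [h, Finset.sum_empty, Real.exp_nonneg]
  obtain ⟨hball, rfl⟩ := (Finset.mem_filter_univ y).1 hy
  calc _ ≤ ∑ y' ∈ typeClass x (typeCount (Function.prod x y)), ∏ i, Q (y' i) :=
        Finset.sum_le_sum_of_subset_of_nonneg
          (fun y' hy' ↦ mem_typeClass.2 ((Finset.mem_filter_univ y').1 hy').2)
          fun y' _ _ ↦ Finset.prod_nonneg fun i _ ↦ (hQ _).le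
    _ ≤ _ := sum_typeClass_le_exp_neg_prodDiv hQ (sum_typeCount_prod x y)
    _ ≤ _ := Real.exp_le_exp.2 <| neg_le_neg <|
        Rfun_le_prodDiv (fun a ↦ Nat.cast_nonneg _) hQ (typeCount_prod_mem_admissible_iff.2 hball)

lemma exp_neg_prodDiv_sub_le_ballProbN (hQ : ∀ b, 0 < Q b) {N : α × β → ℕ}
    (hN : (fun z ↦ (N z : ℝ)) ∈ admissible (fun a ↦ (typeCount x a : ℝ)) d (n * Δ)) :
    Real.exp (-prodDiv (fun a ↦ (typeCount x a : ℝ)) Q (fun z ↦ (N z : ℝ))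
      - Fintype.card (α × β) * (1 + Real.log (n + 1))) ≤ ballProbN Q d Δ x := by
  classical
  have hclass := exp_neg_prodDiv_sub_le_sum_typeClass hQ (natCast_mem_admissible_iff.1 hN).1
  rw [Fintype.card_fin] at hclass
  rw [ballProbN_eq_sum_filter]
  refine hclass.trans (Finset.sum_le_sum_of_subset_of_nonneg (fun y hy ↦ ?_)
    fun y _ _ ↦ Finset.prod_nonneg fun i _ ↦ (hQ _).le)
  obtain rfl := mem_typeClass.1 hy
  exact (Finset.mem_filter_univ y).2 (typeCount_prod_mem_admissible_iff.1 hN)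

lemma Rfun_sub_le_neg_log_ballProbN [Nonempty β] (hQ : ∀ b, 0 < Q b)
    (hpos : 0 < ballProbN Q d Δ x) :
    Rfun (fun a ↦ (typeCount x a : ℝ)) Q d (n * Δ) - Fintype.card (α × β) * Real.log (n + 1)
      ≤ -Real.log (ballProbN Q d Δ x) := by
  have h := Real.log_le_log hpos (ballProbN_le hQ)
  rw [Real.log_mul (by positivity) (Real.exp_ne_zero _), Real.log_pow, Real.log_exp] at h
  linarith

lemma neg_log_ballProbN_le_prodDiv_add [Nonempty β] (hQ : ∀ b, 0 < Q b) {M : α × β → ℝ}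
    (hM : M ∈ admissible (fun a ↦ (typeCount x a : ℝ)) d (n * Δ)) :
    -Real.log (ballProbN Q d Δ x) ≤ prodDiv (fun a ↦ (typeCount x a : ℝ)) Q M
      + errorConst α Q * (1 + Real.log (n + 1)) := by
  obtain ⟨N, hN, hNM⟩ := exists_nat_mem_admissible hM
  have hlog : 0 ≤ Real.log (n + 1) := Real.log_nonneg (by simp)
  have hball := (Real.le_log_iff_exp_le ((Real.exp_pos _).trans_le
    (exp_neg_prodDiv_sub_le_ballProbN hQ hN))).2 (exp_neg_prodDiv_sub_le_ballProbN hQ hN)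
  have hround := prodDiv_le_prodDiv_add hQ hM hN (B := n + 1) (by simp)
    (fun a ↦ mod_cast ((typeCount_le_card x a).trans_eq (Fintype.card_fin n)).trans n.le_succ) hNM
  linarith [sum_add_card_mul_le_errorConst_mul (α := α) (Q := Q) (le_add_of_nonneg_right hlog)]

lemma neg_log_ballProbN_le_Rfun_add [Nonempty β] (hQ : ∀ b, 0 < Q b) {y : Fin n → β}
    (hy : ∑ i, d (x i) (y i) ≤ n * Δ) :
    -Real.log (ballProbN Q d Δ x) ≤ Rfun (fun a ↦ (typeCount x a : ℝ)) Q d (n * Δ)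
      + errorConst α Q * (1 + Real.log (n + 1)) := by
  classical
  rw [Rfun_eq_sInf_prodDiv (fun a ↦ Nat.cast_nonneg _) hQ, ← sub_le_iff_le_add]
  refine le_csInf ⟨_, _, typeCount_prod_mem_admissible_iff.2 hy, rfl⟩ ?_
  rintro _ ⟨M, hM, rfl⟩
  exact sub_le_iff_le_add.2 (neg_log_ballProbN_le_prodDiv_add hQ hM)

lemma abs_log_ballProbN_sub_Rfun_le (hQ : ∀ b, 0 < Q b) (hn : n ≠ 0) {y : Fin n → β}
    (hy : ∑ i, d (x i) (y i) ≤ n * Δ) :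
    |-(1 / (n : ℝ)) * Real.log (ballProbN Q d Δ x) - Rfun (empType x) Q d Δ|
      ≤ errorConst α Q * ((1 + Real.log (n + 1)) / n) := by
  have : Nonempty β := ⟨y ⟨0, Nat.pos_of_ne_zero hn⟩⟩
  have hn0 : (0 : ℝ) < n := mod_cast Nat.pos_of_ne_zero hn
  have hlower := Rfun_sub_le_neg_log_ballProbN hQ (ballProbN_pos hQ hy)
  have hupper := neg_log_ballProbN_le_Rfun_add hQ hy
  rw [← smul_empType hn, Rfun_smul (fun a ↦ by unfold empType; positivity) hQ hn0] at hlower hupper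
  have hlog : 0 ≤ Real.log (n + 1) := Real.log_nonneg (by simp)
  have hpoly : Fintype.card (α × β) * Real.log (n + 1)
      ≤ errorConst α Q * (1 + Real.log (n + 1)) :=
    mul_le_mul card_le_errorConst (by linarith) hlog ((Nat.cast_nonneg _).trans card_le_errorConst)
  calc |-(1 / (n : ℝ)) * Real.log (ballProbN Q d Δ x) - Rfun (empType x) Q d Δ|
      = |(-Real.log (ballProbN Q d Δ x) - n * Rfun (empType x) Q d Δ) / n| := by
        congr 1
        field_simp
    _ = |-Real.log (ballProbN Q d Δ x) - n * Rfun (empType x) Q d Δ| / n := by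
        rw [abs_div, abs_of_pos hn0]
    _ ≤ errorConst α Q * (1 + Real.log (n + 1)) / n := by
        gcongr
        exact abs_le.2 ⟨by linarith, by linarith⟩
    _ = errorConst α Q * ((1 + Real.log (n + 1)) / n) := mul_div_assoc _ _ _

end Ball

theorem ball_prob_exponent_general {𝒳 𝒳' : Type*} [Fintype 𝒳] [DecidableEq 𝒳] [Fintype 𝒳']
    (Q : 𝒳' → ℝ) (hQpos : ∀ y, 0 < Q y) :
    ∀ ε > 0, ∃ N : ℕ, ∀ n ≥ N, ∀ (d : 𝒳 → 𝒳' → ℝ) (Δ : ℝ) (x : Fin n → 𝒳),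
      (∃ y : Fin n → 𝒳', ∑ i, d (x i) (y i) ≤ n * Δ) →
      |(-(1 / (n : ℝ))) * Real.log (ballProbN Q d Δ x) - Rfun (empType x) Q d Δ| ≤ ε := by
  intro ε hε
  have hlim : Filter.Tendsto (fun n : ℕ ↦ errorConst 𝒳 Q * ((1 + Real.log (n + 1)) / n))
      Filter.atTop (nhds 0) := by
    simpa using tendsto_one_add_log_succ_div_atTop.const_mul (errorConst 𝒳 Q)
  obtain ⟨N, hN⟩ := Filter.eventually_atTop.1
    ((hlim.eventually_le_const hε).and (Filter.eventually_ne_atTop 0))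
  refine ⟨N, fun n hn d Δ x ⟨y, hy⟩ ↦ ?_⟩
  exact (abs_log_ballProbN_sub_Rfun_le hQpos (hN n hn).2 hy).trans (hN n hn).1

/-- Method-of-types estimate: uniformly over `x ∈ 𝒳^n`,
`(−1/n) log Q^{⊗n}(A_Δ(x)) = R(P_x, Q_{X̂}|Δ) + o(1)` as `n → ∞`, where `P_x`
is the empirical type of `x`. -/
theorem ball_prob_exponent {𝒳 𝒳' : Type*} [Fintype 𝒳] [DecidableEq 𝒳]
    [Fintype 𝒳'] (Q : 𝒳' → ℝ) (hQpos : ∀ y, 0 < Q y) (hQ1 : ∑ y, Q y = 1)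
    (d : 𝒳 → 𝒳' → ℝ) (hd : ∀ x y, 0 ≤ d x y) (Δ : ℝ) (hΔ : 0 ≤ Δ)
    (hne : ∀ x, ∃ y, d x y ≤ Δ) :
    ∀ ε > 0, ∃ N : ℕ, ∀ n ≥ N, ∀ x : Fin n → 𝒳,
      |(-(1 / (n : ℝ))) * Real.log (ballProbN Q d Δ x)
          - Rfun (empType x) Q d Δ| ≤ ε := by
  intro ε hε
  obtain ⟨N, hN⟩ := ball_prob_exponent_general (𝒳 := 𝒳) Q hQpos ε hε
  choose f hf using hne
  refine ⟨N, fun n hn x ↦ hN n hn d Δ x ⟨f ∘ x, ?_⟩⟩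
  exact (Finset.sum_le_card_nsmul _ _ Δ fun i _ ↦ hf (x i)).trans_eq (by simp)
end

section
/- Let X^n be i.i.d. with per-letter distribution P_X on finite 𝒳 and let Q_{X̂} be a distribution on finite 𝒳̂ defining the i.i.d. asynchronous guessing strategy Q_{X̂}^{⊗n}. For any positive integer ρ, lim_{n→∞} (1/n) log E[G_ρ(X^n|Q_{X̂}^n)] = max_{Q_X} [ρ R(Q_X,Q_{X̂}|Δ) − D(Q_X‖P_X)], where the maximum is over all distributions Q_X on 𝒳. -/
open scoped BigOperators

/-- `ρ`-th moment of the number of guesses of an i.i.d. asynchronous strategy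
`Q^{⊗n}` for an i.i.d. source `P^{⊗n}`: the number of guesses given `x` is
geometric with parameter `Q^{⊗n}(A_Δ(x))`. -/
noncomputable def guessMomentN {𝒳 𝒳' : Type*} [Fintype 𝒳] [Fintype 𝒳']
    (P : 𝒳 → ℝ) (Q : 𝒳' → ℝ) (d : 𝒳 → 𝒳' → ℝ) (Δ : ℝ) (ρ : ℕ) (n : ℕ) : ℝ :=
  ∑ x : Fin n → 𝒳, (∏ i, P (x i)) *
    ∑' k : ℕ, ((k : ℝ) + 1) ^ ρ *
      ((1 - ballProbN Q d Δ x) ^ k * ballProbN Q d Δ x)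

/-!
Bounding `(k + 1) ^ ρ` from below by a tangent and from above by a rising factorial, the `ρ`-th
moment of the number of guesses given `x` lies between `q_x ^ (-ρ)` and `ρ! q_x ^ (-ρ)`, where
`q_x = Q^{⊗n}(A_Δ(x))`. Hence the exponent is that of `E[q_X ^ (-ρ)]`.

Lower bound: changing the measure from `P^{⊗n}` to `Q_X^{⊗n}` gives
`log E[q_X ^ (-ρ)] ≥ ρ E_{Q_X}[-log q_X] - n D(Q_X ‖ P)`. Here `-log q_x` is the divergence from
`Q^{⊗n}` of the law of a codeword conditioned on hitting the distortion ball of `x`; averaging this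
`n`-letter channel over positions produces a single-letter channel of distortion at most `Δ`, so
`E_{Q_X}[-log q_X] ≥ n R(Q_X, Q | Δ)`.

Upper bound: `q_x ≥ exp (-n (R(t, Q | Δ) + o(1)))` uniformly in `x`, where `t` is the type of `x`,
and there are only polynomially many types. For the bound on `q_x`, draw codewords from a nearly
optimal channel for `t`, change the measure to `Q^{⊗n}` and apply Chernoff's bound to the
log-likelihood ratio. The optimal channel may sit exactly at distortion `Δ`; mixing a little of a
distortion minimiser into it makes the ball likely enough, by Markov's inequality alone.
-/

namespace Guessing

open Filter Finset Real
open scoped Topology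

lemma exists_pos_mul_le_and_mul_le (a b : ℝ) {A B : ℝ} (hA : 0 < A) (hB : 0 < B) :
    ∃ t > 0, t * a ≤ A ∧ t * b ≤ B := by
  obtain ⟨t, ht, hlt⟩ := exists_pos_mul_lt one_pos (max (a / A) (b / B))
  refine ⟨t, ht, ?_, ?_⟩
  · have h := (mul_le_mul_of_nonneg_right (le_max_left _ _) ht.le).trans hlt.le
    rwa [div_mul_eq_mul_div, div_le_one hA, mul_comm] at h
  · have h := (mul_le_mul_of_nonneg_right (le_max_right _ _) ht.le).trans hlt.le
    rwa [div_mul_eq_mul_div, div_le_one hB, mul_comm] at h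

lemma sum_mul_le_of_mem_stdSimplex {κ : Type*} [Fintype κ] {p f : κ → ℝ}
    (hp : p ∈ stdSimplex ℝ κ) {B : ℝ} (hf : ∀ b, p b ≠ 0 → f b ≤ B) : ∑ b, p b * f b ≤ B := by
  calc ∑ b, p b * f b ≤ ∑ b, p b * B := sum_le_sum fun b _ => by
        rcases (hp.1 b).eq_or_lt with hb | hb
        · simp [← hb]
        · exact mul_le_mul_of_nonneg_left (hf b hb.ne') hb.le
    _ = B := by rw [← sum_mul, hp.2, one_mul]

section ProductDistribution

variable {ι κ : Type*} [Fintype ι] [DecidableEq ι] [Fintype κ]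

lemma prod_mem_stdSimplex {p : ι → κ → ℝ} (hp : ∀ i, p i ∈ stdSimplex ℝ κ) :
    (fun y : ι → κ => ∏ i, p i (y i)) ∈ stdSimplex ℝ (ι → κ) :=
  ⟨fun _ => prod_nonneg fun i _ => (hp i).1 _, by simp [← Fintype.prod_sum, (hp _).2]⟩

lemma sum_prod_mul_apply {p : ι → κ → ℝ} (hp : ∀ i, p i ∈ stdSimplex ℝ κ) (j : ι) (h : κ → ℝ) :
    ∑ y : ι → κ, (∏ i, p i (y i)) * h (y j) = ∑ b, p j b * h b := by
  have absorb (y : ι → κ) :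
      (∏ i, p i (y i)) * h (y j) = ∏ i, p i (y i) * if i = j then h (y i) else 1 := by
    rw [prod_mul_distrib]
    simp
  rw [sum_congr rfl fun y _ => absorb y,
    ← Fintype.prod_sum fun i b => p i b * if i = j then h b else 1,
    Fintype.prod_eq_single j fun i hij => by simp [hij, (hp i).2]]
  simp

lemma sum_prod_mul_sum {p : ι → κ → ℝ} (hp : ∀ i, p i ∈ stdSimplex ℝ κ) (h : ι → κ → ℝ) :
    ∑ y : ι → κ, (∏ i, p i (y i)) * ∑ i, h i (y i) = ∑ i, ∑ b, p i b * h i b := by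
  simp_rw [mul_sum]
  rw [sum_comm]
  exact sum_congr rfl fun i _ => sum_prod_mul_apply hp i (h i)

end ProductDistribution

section Divergence

variable {κ : Type*} [Fintype κ] {p q : κ → ℝ}

lemma klDivR_eq_sum (p q : κ → ℝ) : klDivR p q = ∑ b, p b * log (p b / q b) :=
  sum_congr rfl fun b _ => by split_ifs with h <;> simp [h]

lemma mul_log_div (x : ℝ) {y : ℝ} (hy : y ≠ 0) : x * log (x / y) = x * log x - x * log y := by
  rcases eq_or_ne x 0 with rfl | hx
  · simp
  · rw [log_div hx hy, mul_sub]

-- The easy half of the Donsker–Varadhan formula: Jensen's inequality for `exp (f - log (p / q))`.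
lemma exp_sum_mul_sub_klDivR_le (hp : p ∈ stdSimplex ℝ κ) (hq : ∀ b, 0 ≤ q b)
    (hpq : ∀ b, q b = 0 → p b = 0) (f : κ → ℝ) :
    exp (∑ b, p b * f b - klDivR p q) ≤ ∑ b, q b * exp (f b) := by
  calc exp (∑ b, p b * f b - klDivR p q)
      = exp (∑ b, p b • (f b - log (p b / q b))) := by
        simp only [klDivR_eq_sum, smul_eq_mul, mul_sub, sum_sub_distrib]
    _ ≤ ∑ b, p b • exp (f b - log (p b / q b)) :=
        convexOn_exp.map_sum_le (fun b _ => hp.1 b) hp.2 fun _ _ => Set.mem_univ _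
    _ ≤ ∑ b, q b * exp (f b) := sum_le_sum fun b _ => ?_
  rcases (hp.1 b).eq_or_lt with hpb | hpb
  · rw [← hpb, zero_smul]
    exact mul_nonneg (hq b) (exp_pos _).le
  · have hqb : 0 < q b := (hq b).lt_of_ne fun h => hpb.ne' (hpq b h.symm)
    rw [exp_sub, exp_log (div_pos hpb hqb), smul_eq_mul]
    exact le_of_eq (by field_simp)

lemma klDivR_nonneg (hp : p ∈ stdSimplex ℝ κ) (hq : q ∈ stdSimplex ℝ κ)
    (hpq : ∀ b, q b = 0 → p b = 0) : 0 ≤ klDivR p q := by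
  have h := exp_sum_mul_sub_klDivR_le hp hq.1 hpq 0
  simp only [Pi.zero_apply, mul_zero, sum_const_zero, zero_sub, exp_zero, mul_one, hq.2] at h
  linarith [exp_le_one_iff.1 h]

lemma klDivR_le_of_abs_log_le (hp : p ∈ stdSimplex ℝ κ) (hq : ∀ b, 0 < q b) {L : ℝ}
    (hL : ∀ b, |log (q b)| ≤ L) : klDivR p q ≤ L := by
  rw [klDivR_eq_sum]
  refine sum_mul_le_of_mem_stdSimplex hp fun b hb => ?_
  rw [log_div hb (hq b).ne']
  linarith [log_nonpos (hp.1 b) (mem_Icc_of_mem_stdSimplex hp b).2, neg_le_abs (log (q b)), hL b]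

lemma convexOn_klDivR (hq : ∀ b, 0 < q b) :
    ConvexOn ℝ (Set.Ici 0) fun p : κ → ℝ => klDivR p q := by
  refine ⟨convex_Ici 0, fun p hp r hr s t hs ht hst => ?_⟩
  simp only [klDivR_eq_sum, smul_eq_mul, mul_sum, ← sum_add_distrib, Pi.add_apply, Pi.smul_apply]
  refine sum_le_sum fun b _ => ?_
  have hconv := Real.convexOn_mul_log.2 (Set.mem_Ici.2 (hp b)) (Set.mem_Ici.2 (hr b)) hs ht hst
  simp only [smul_eq_mul] at hconv
  simp only [mul_log_div _ (hq b).ne']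
  linarith

lemma klDivR_prod {ι : Type*} [Fintype ι] [DecidableEq ι] {p q : ι → κ → ℝ}
    (hp : ∀ i, p i ∈ stdSimplex ℝ κ) (hpq : ∀ i b, q i b = 0 → p i b = 0) :
    klDivR (fun y : ι → κ => ∏ i, p i (y i)) (fun y => ∏ i, q i (y i)) =
      ∑ i, klDivR (p i) (q i) := by
  simp only [klDivR_eq_sum]
  rw [← sum_prod_mul_sum hp fun i b => log (p i b / q i b)]
  refine sum_congr rfl fun y _ => ?_
  by_cases hy : ∏ i, p i (y i) = 0
  · simp [hy]
  · have hpy := prod_ne_zero_iff.1 hy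
    rw [← prod_div_distrib, log_prod fun i hi =>
      div_ne_zero (hpy i hi) fun h => hpy i hi (hpq i _ h)]

lemma sum_mul_sum_log_le_klDivR {ι : Type*} [Fintype ι] [DecidableEq ι] {w : (ι → κ) → ℝ}
    {v q : ι → κ → ℝ} (hw : w ∈ stdSimplex ℝ (ι → κ)) (hv : ∀ i, v i ∈ stdSimplex ℝ κ)
    (hq : ∀ i b, 0 < q i b) (hwv : ∀ y, ∏ i, v i (y i) = 0 → w y = 0) :
    ∑ y, w y * ∑ i, log (v i (y i) / q i (y i)) ≤ klDivR w fun y => ∏ i, q i (y i) := by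
  have hgibbs := klDivR_nonneg hw (prod_mem_stdSimplex hv) hwv
  rw [klDivR_eq_sum] at hgibbs
  rw [klDivR_eq_sum, ← sub_nonneg, ← sum_sub_distrib]
  refine hgibbs.trans_eq (sum_congr rfl fun y _ => ?_)
  by_cases hy : ∏ i, v i (y i) = 0
  · simp [hwv y hy]
  · have hvy := prod_ne_zero_iff.1 hy
    have hqy : ∏ i, q i (y i) ≠ 0 := (prod_pos fun i _ => hq i (y i)).ne'
    rw [← log_prod fun i hi => div_ne_zero (hvy i hi) (hq i _).ne', prod_div_distrib,
      mul_log_div _ hy, mul_log_div _ hqy, log_div hy hqy]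
    ring

end Divergence

section ChangeOfMeasure

/-- The moment generating function `E_p[(p/q)^t]` of the log-likelihood ratio `log (p/q)` under
`p`, used for Chernoff bounds; up to the factor `t`, its logarithm is the Rényi divergence of
order `1 + t`. -/
noncomputable def llrMgf {κ : Type*} [Fintype κ] (p q : κ → ℝ) (t : ℝ) : ℝ :=
  ∑ b, p b * exp (t * log (p b / q b))

variable {κ : Type*} [Fintype κ]

lemma llrMgf_nonneg {p : κ → ℝ} (hp : ∀ b, 0 ≤ p b) (q : κ → ℝ) (t : ℝ) : 0 ≤ llrMgf p q t :=
  sum_nonneg fun b _ => mul_nonneg (hp b) (exp_pos _).le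

lemma llrMgf_prod {ι : Type*} [Fintype ι] [DecidableEq ι] (p : ι → κ → ℝ) {q : ι → κ → ℝ}
    (hq : ∀ i b, q i b ≠ 0) (t : ℝ) :
    llrMgf (fun y : ι → κ => ∏ i, p i (y i)) (fun y => ∏ i, q i (y i)) t =
      ∏ i, llrMgf (p i) (q i) t := by
  simp only [llrMgf, Fintype.prod_sum, prod_mul_distrib]
  refine sum_congr rfl fun y _ => ?_
  by_cases hy : ∏ i, p i (y i) = 0
  · simp [hy]
  · rw [← prod_div_distrib, log_prod fun i hi => div_ne_zero (prod_ne_zero_iff.1 hy i hi) (hq i _),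
      mul_sum, exp_sum]

lemma sum_le_exp_mul_sum_add_llrMgf {p q : κ → ℝ} (hp : ∀ b, 0 ≤ p b) (hq : ∀ b, 0 < q b)
    {t : ℝ} (ht : 0 ≤ t) (K : ℝ) (A : Finset κ) :
    ∑ b ∈ A, p b ≤ exp K * ∑ b ∈ A, q b + exp (-(t * K)) * llrMgf p q t := by
  have pointwise (b : κ) :
      p b ≤ exp K * q b + exp (-(t * K)) * (p b * exp (t * log (p b / q b))) := by
    rcases le_total (p b) (exp K * q b) with h | h
    · have := hp b
      exact h.trans (le_add_of_nonneg_right (by positivity))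
    · have hK : K ≤ log (p b / q b) := by
        rw [← log_exp K]
        exact log_le_log (exp_pos K) ((le_div_iff₀ (hq b)).2 h)
      have hexp : 1 ≤ exp (-(t * K) + t * log (p b / q b)) :=
        one_le_exp (by linarith [mul_le_mul_of_nonneg_left hK ht])
      have := hq b
      calc p b ≤ p b * exp (-(t * K) + t * log (p b / q b)) := le_mul_of_one_le_right (hp b) hexp
        _ = exp (-(t * K)) * (p b * exp (t * log (p b / q b))) := by rw [exp_add]; ring
        _ ≤ _ := le_add_of_nonneg_left (by positivity)
  calc ∑ b ∈ A, p b
      ≤ exp K * ∑ b ∈ A, q b + exp (-(t * K)) * ∑ b ∈ A, p b * exp (t * log (p b / q b)) := by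
        simpa only [mul_sum, ← sum_add_distrib] using sum_le_sum fun b _ => pointwise b
    _ ≤ _ := by
        unfold llrMgf
        gcongr
        · exact fun b _ _ => mul_nonneg (hp b) (exp_pos _).le
        · exact subset_univ A

lemma exp_le_one_add_add_sq {u : ℝ} (hu : u ≤ 1) : exp u ≤ 1 + u + u ^ 2 := by
  rcases le_total (-1) u with h | h
  · linarith [(abs_le.1 (abs_exp_sub_one_sub_id_le (abs_le.2 ⟨h, hu⟩))).2]
  · nlinarith [exp_le_one_iff.2 (h.trans (by norm_num))]

lemma mul_log_sq_le {x : ℝ} (hx0 : 0 ≤ x) (hx1 : x ≤ 1) : x * log x ^ 2 ≤ 4 := by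
  rcases hx0.eq_or_lt with rfl | hx
  · simp
  · have h : |log x * √x| ≤ 2 := by
      simpa [sqrt_eq_rpow] using (abs_log_mul_self_rpow_lt x (1 / 2) hx hx1 (by norm_num)).le
    calc x * log x ^ 2 = |log x * √x| ^ 2 := by rw [sq_abs, mul_pow, sq_sqrt hx0, mul_comm]
      _ ≤ 2 ^ 2 := by gcongr
      _ = 4 := by norm_num

lemma mul_log_div_sq_le {x y L : ℝ} (hx0 : 0 ≤ x) (hx1 : x ≤ 1) (hy : y ≠ 0)
    (hL : |log y| ≤ L) : x * log (x / y) ^ 2 ≤ 8 + 2 * L ^ 2 := by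
  rcases hx0.eq_or_lt with rfl | hx
  · simpa using by positivity
  · have hlog : x * log y ^ 2 ≤ L ^ 2 := by
      calc x * log y ^ 2 ≤ 1 * |log y| ^ 2 := by rw [sq_abs]; gcongr
        _ ≤ L ^ 2 := by rw [one_mul]; gcongr
    rw [log_div hx.ne' hy]
    nlinarith [mul_log_sq_le hx0 hx1, mul_nonneg hx0 (sq_nonneg (log x + log y))]

lemma llrMgf_le {p q : κ → ℝ} (hp : p ∈ stdSimplex ℝ κ) (hq : ∀ b, 0 < q b) {L t : ℝ}
    (hL : ∀ b, |log (q b)| ≤ L) (ht : 0 ≤ t) (htL : t * L ≤ 1) :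
    llrMgf p q t ≤ exp (t * klDivR p q + t ^ 2 * (Fintype.card κ * (8 + 2 * L ^ 2))) := by
  have pointwise (b : κ) : p b * exp (t * log (p b / q b)) ≤
      p b + t * (p b * log (p b / q b)) + t ^ 2 * (8 + 2 * L ^ 2) := by
    have hp1 := (mem_Icc_of_mem_stdSimplex hp b).2
    rcases (hp.1 b).eq_or_lt with h | h
    · rw [← h]
      simpa using by positivity
    · have hle : log (p b / q b) ≤ L := by
        rw [log_div h.ne' (hq b).ne']
        linarith [log_nonpos h.le hp1, neg_le_abs (log (q b)), hL b]
      have hexp := exp_le_one_add_add_sq ((mul_le_mul_of_nonneg_left hle ht).trans htL)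
      have hsq := mul_log_div_sq_le h.le hp1 (hq b).ne' (hL b)
      calc p b * exp (t * log (p b / q b))
          ≤ p b * (1 + t * log (p b / q b) + (t * log (p b / q b)) ^ 2) := by gcongr
        _ = p b + t * (p b * log (p b / q b)) + t ^ 2 * (p b * log (p b / q b) ^ 2) := by ring
        _ ≤ _ := by gcongr
  calc llrMgf p q t
      ≤ ∑ b, (p b + t * (p b * log (p b / q b)) + t ^ 2 * (8 + 2 * L ^ 2)) :=
        sum_le_sum fun b _ => pointwise b
    _ = t * klDivR p q + t ^ 2 * (Fintype.card κ * (8 + 2 * L ^ 2)) + 1 := by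
        rw [klDivR_eq_sum, sum_add_distrib, sum_add_distrib, hp.2, ← mul_sum, sum_const, card_univ,
          nsmul_eq_mul]
        ring
    _ ≤ _ := add_one_le_exp _

-- Chernoff's bound for the log-likelihood ratio, uniformly over the product distributions `∏ p i`.
lemma exists_sum_prod_le_exp_mul_sum_prod_add {q : κ → ℝ} (hq : ∀ b, 0 < q b) {η : ℝ}
    (hη : 0 < η) :
    ∃ s > 0, ∀ (n : ℕ) (p : Fin n → κ → ℝ), (∀ i, p i ∈ stdSimplex ℝ κ) →
      ∀ A : Finset (Fin n → κ), ∑ y ∈ A, ∏ i, p i (y i) ≤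
        exp (∑ i, klDivR (p i) q + n * η) * ∑ y ∈ A, ∏ i, q (y i) + exp (-(s * n)) := by
  obtain ⟨L, hL⟩ := Finite.exists_le fun b => |log (q b)|
  set C : ℝ := Fintype.card κ * (8 + 2 * L ^ 2)
  obtain ⟨t, ht, htL, htC⟩ := exists_pos_mul_le_and_mul_le L C one_pos (half_pos hη)
  refine ⟨t * (η / 2), by positivity, fun n p hp A => ?_⟩
  set D := ∑ i, klDivR (p i) q
  have hmgf : llrMgf (fun y : Fin n → κ => ∏ i, p i (y i)) (fun y => ∏ i, q (y i)) t ≤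
      exp (t * D + n * (t ^ 2 * C)) := by
    calc _ = ∏ i, llrMgf (p i) q t := llrMgf_prod p (fun _ b => (hq b).ne') t
      _ ≤ ∏ i, exp (t * klDivR (p i) q + t ^ 2 * C) := prod_le_prod
          (fun i _ => llrMgf_nonneg (hp i).1 q t) fun i _ => llrMgf_le (hp i) hq hL ht.le htL
      _ = exp (t * D + n * (t ^ 2 * C)) := by
          simp [← exp_sum, sum_add_distrib, ← mul_sum, D]
  refine (sum_le_exp_mul_sum_add_llrMgf (q := fun y => ∏ i, q (y i))
    (prod_mem_stdSimplex hp).1 (fun y => prod_pos fun i _ => hq (y i)) ht.le (D + n * η) A).trans ?_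
  gcongr
  refine (mul_le_mul_of_nonneg_left hmgf (exp_pos _).le).trans ?_
  rw [← exp_add, exp_le_exp]
  linarith [mul_le_mul_of_nonneg_left htC (show 0 ≤ n * t by positivity)]

end ChangeOfMeasure

section RateFunction

lemma isChannel_iff {ι κ : Type*} [Fintype κ] {V : ι → κ → ℝ} :
    IsChannel V ↔ ∀ a, V a ∈ stdSimplex ℝ κ :=
  forall_and.symm

variable {ι κ : Type*} [Fintype ι] [Fintype κ]

-- `I(p, V) + D(pV ‖ q) = D(V ‖ q | p)`: the output distribution `pV` cancels.
lemma mutualInfoR_add_klDivR {p : ι → ℝ} (hp : ∀ a, 0 ≤ p a) {V : ι → κ → ℝ}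
    (hV : ∀ a b, 0 ≤ V a b) {q : κ → ℝ} (hq : ∀ b, q b ≠ 0) :
    mutualInfoR p V + klDivR (fun b => ∑ a, p a * V a b) q = ∑ a, p a * klDivR (V a) q := by
  simp only [mutualInfoR, klDivR_eq_sum, Fintype.sum_prod_type, sum_mul, mul_sum]
  rw [sum_comm (s := (univ : Finset κ)), ← sum_add_distrib]
  refine sum_congr rfl fun a _ => ?_
  rw [← sum_add_distrib]
  refine sum_congr rfl fun b _ => ?_
  by_cases h : p a * V a b = 0
  · rw [← mul_assoc (p a)]
    simp [h]
  · have hout : ∑ x, p x * V x b ≠ 0 := fun h0 => h <|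
      (sum_eq_zero_iff_of_nonneg fun x _ => mul_nonneg (hp x) (hV x b)).1 h0 a (mem_univ a)
    rw [← mul_sum, mul_div_mul_left _ _ (left_ne_zero_of_mul h),
      log_div (right_ne_zero_of_mul h) hout, log_div hout (hq b),
      log_div (right_ne_zero_of_mul h) (hq b)]
    ring

/-- The channels over which `R(p, · | Δ)` is minimised: those whose expected distortion under the
input distribution `p` is at most `Δ`. -/
def feasibleChannels (p : ι → ℝ) (d : ι → κ → ℝ) (Δ : ℝ) : Set (ι → κ → ℝ) :=
  {V | IsChannel V ∧ ∑ a, p a * ∑ b, V a b * d a b ≤ Δ}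

variable {p : ι → ℝ} {q : κ → ℝ} {d : ι → κ → ℝ} {Δ : ℝ}

lemma Rfun_eq_sInf_image (hp : ∀ a, 0 ≤ p a) (hq : ∀ b, q b ≠ 0) :
    Rfun p q d Δ =
      sInf ((fun V : ι → κ → ℝ => ∑ a, p a * klDivR (V a) q) '' feasibleChannels p d Δ) := by
  refine congrArg sInf (Set.ext fun r => ?_)
  simp only [feasibleChannels, Set.mem_ofPred_eq, Set.mem_image, mul_sum, mul_assoc]
  refine exists_congr fun V =>
    ⟨fun ⟨hV, hd, hr⟩ => ⟨⟨hV, hd⟩, ?_⟩, fun ⟨⟨hV, hd⟩, hr⟩ => ⟨hV, hd, ?_⟩⟩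
  · rw [hr, ← mutualInfoR_add_klDivR hp hV.1 hq]
  · rw [← hr, mutualInfoR_add_klDivR hp hV.1 hq]

lemma Rfun_le (hp : ∀ a, 0 ≤ p a) (hq : q ∈ stdSimplex ℝ κ) (hq0 : ∀ b, q b ≠ 0)
    {V : ι → κ → ℝ} (hV : V ∈ feasibleChannels p d Δ) :
    Rfun p q d Δ ≤ ∑ a, p a * klDivR (V a) q := by
  rw [Rfun_eq_sInf_image hp hq0]
  refine csInf_le ⟨0, ?_⟩ (Set.mem_image_of_mem _ hV)
  rintro _ ⟨W, hW, rfl⟩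
  exact sum_nonneg fun a _ => mul_nonneg (hp a) <|
    klDivR_nonneg (isChannel_iff.1 hW.1 a) hq fun b hb => (hq0 b hb).elim

lemma feasibleChannels_nonempty (hp : p ∈ stdSimplex ℝ ι) (hΔ : ∀ a, ∃ b, d a b ≤ Δ) :
    (feasibleChannels p d Δ).Nonempty := by
  classical
  choose f hf using hΔ
  refine ⟨fun a => Pi.single (f a) 1, isChannel_iff.2 fun a => single_mem_stdSimplex ℝ (f a), ?_⟩
  refine sum_mul_le_of_mem_stdSimplex hp fun a _ => ?_
  simpa [Pi.single_apply] using hf a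

lemma exists_sum_mul_klDivR_lt (hp : p ∈ stdSimplex ℝ ι) (hq : ∀ b, q b ≠ 0)
    (hΔ : ∀ a, ∃ b, d a b ≤ Δ) {r : ℝ} (hr : Rfun p q d Δ < r) :
    ∃ V ∈ feasibleChannels p d Δ, ∑ a, p a * klDivR (V a) q < r := by
  rw [Rfun_eq_sInf_image hp.1 hq] at hr
  simpa using exists_lt_of_csInf_lt ((feasibleChannels_nonempty hp hΔ).image _) hr

lemma Rfun_le_of_abs_log_le (hp : p ∈ stdSimplex ℝ ι) (hq : q ∈ stdSimplex ℝ κ)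
    (hq0 : ∀ b, 0 < q b) (hΔ : ∀ a, ∃ b, d a b ≤ Δ) {L : ℝ} (hL : ∀ b, |log (q b)| ≤ L) :
    Rfun p q d Δ ≤ L := by
  obtain ⟨V, hV⟩ := feasibleChannels_nonempty hp hΔ
  exact (Rfun_le hp.1 hq (fun b => (hq0 b).ne') hV).trans <| sum_mul_le_of_mem_stdSimplex hp
    fun a _ => klDivR_le_of_abs_log_le (isChannel_iff.1 hV.1 a) hq0 hL

end RateFunction

section EmpiricalDistribution

/-- The type (empirical distribution) of a sequence; it is `0` for the empty sequence. -/
noncomputable def empDist {α : Type*} [DecidableEq α] {n : ℕ} (x : Fin n → α) (a : α) : ℝ :=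
  #{i | x i = a} / n

variable {α : Type*} [DecidableEq α] {n : ℕ}

lemma empDist_nonneg (x : Fin n → α) (a : α) : 0 ≤ empDist x a := by
  unfold empDist
  positivity

lemma empDist_apply_pos (x : Fin n → α) (i : Fin n) : 0 < empDist x (x i) :=
  div_pos (Nat.cast_pos.2 (card_pos.2 ⟨i, by simp⟩)) (Nat.cast_pos.2 i.pos)

lemma empDist_eq_zero_of_forall_ne {x : Fin n → α} {a : α} (h : ∀ i, x i ≠ a) :
    empDist x a = 0 := by
  simp [empDist, h]

variable [Fintype α]

lemma sum_empDist_mul (x : Fin n → α) (h : α → ℝ) :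
    ∑ a, empDist x a * h a = (∑ i, h (x i)) / n := by
  simp only [empDist, div_mul_eq_mul_div, ← sum_div, card_filter, Nat.cast_sum, sum_mul]
  rw [sum_comm]
  simp

lemma empDist_mem_stdSimplex (hn : n ≠ 0) (x : Fin n → α) : empDist x ∈ stdSimplex ℝ α := by
  refine ⟨empDist_nonneg x, ?_⟩
  simpa [hn] using sum_empDist_mul x fun _ => 1

lemma prod_apply_eq_prod_empDist_mul_exp {p : α → ℝ} {x : Fin n → α} (hx : ∀ i, 0 < p (x i)) :
    ∏ i, p (x i) = (∏ i, empDist x (x i)) * exp (-(n * klDivR (empDist x) p)) := by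
  have hkl : n * klDivR (empDist x) p = ∑ i, log (empDist x (x i) / p (x i)) := by
    rw [klDivR_eq_sum, sum_empDist_mul x fun a => log (empDist x a / p a)]
    rcases eq_or_ne n 0 with rfl | hn
    · simp
    · field_simp
  rw [hkl, ← sum_neg_distrib, exp_sum, ← prod_mul_distrib]
  refine prod_congr rfl fun i _ => ?_
  have hemp := empDist_apply_pos x i
  have hpi := hx i
  rw [exp_neg, exp_log (by positivity)]
  field_simp

lemma ncard_range_empDist_le :
    (Set.range (empDist : (Fin n → α) → α → ℝ)).ncard ≤ (n + 1) ^ Fintype.card α := by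
  have hrange : Set.range (empDist : (Fin n → α) → α → ℝ) ⊆
      Set.range fun (c : α → Fin (n + 1)) a => ((c a : ℕ) : ℝ) / n := by
    rintro _ ⟨x, rfl⟩
    exact ⟨fun a => ⟨#{i | x i = a},
      Nat.lt_succ_of_le ((card_le_univ _).trans (Fintype.card_fin n).le)⟩, rfl⟩
  calc (Set.range (empDist : (Fin n → α) → α → ℝ)).ncard
      ≤ (Set.range fun (c : α → Fin (n + 1)) a => ((c a : ℕ) : ℝ) / n).ncard :=
        Set.ncard_le_ncard hrange (Set.finite_range _)
    _ ≤ Nat.card (α → Fin (n + 1)) := by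
        rw [← Set.image_univ, ← Set.ncard_univ]
        exact Set.ncard_image_le Set.finite_univ
    _ = (n + 1) ^ Fintype.card α := by simp

-- The sequences of a given type `t` have total mass at most `1` under `t^{⊗n}`.
lemma sum_prod_empDist_le (hn : n ≠ 0) :
    ∑ x : Fin n → α, ∏ i, empDist x (x i) ≤ ((n : ℝ) + 1) ^ Fintype.card α := by
  set types := (Set.finite_range (empDist : (Fin n → α) → α → ℝ)).toFinset with htypes
  have mem_types (x : Fin n → α) : empDist x ∈ types := by simp [htypes]
  have htypes_mem {t : α → ℝ} (ht : t ∈ types) : t ∈ stdSimplex ℝ α := by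
    obtain ⟨x, rfl⟩ := (Set.Finite.mem_toFinset _).1 ht
    exact empDist_mem_stdSimplex hn x
  calc ∑ x : Fin n → α, ∏ i, empDist x (x i)
      ≤ ∑ x : Fin n → α, ∑ t ∈ types, ∏ i, t (x i) := sum_le_sum fun x _ =>
        single_le_sum (f := fun t : α → ℝ => ∏ i, t (x i))
          (fun t ht => prod_nonneg fun i _ => (htypes_mem ht).1 (x i)) (mem_types x)
    _ = ∑ t ∈ types, ∑ x : Fin n → α, ∏ i, t (x i) := sum_comm
    _ = #types := by
        rw [sum_congr rfl fun t ht => (prod_mem_stdSimplex fun _ => htypes_mem ht).2]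
        simp
    _ ≤ ((n : ℝ) + 1) ^ Fintype.card α := by
        rw [← Set.ncard_eq_toFinset_card _ (Set.finite_range _)]
        exact_mod_cast ncard_range_empDist_le

end EmpiricalDistribution

section Achievability

variable {ι κ : Type*} [Fintype κ]

-- Markov's inequality; when `m = 0` it holds because `∑ b, p b * g b = 0`.
lemma le_sum_filter_of_sum_mul_le {p g : κ → ℝ} (hp : p ∈ stdSimplex ℝ κ) (hg : ∀ b, 0 ≤ g b)
    {m δ : ℝ} (hm : 0 ≤ m) (hδ : δ ≤ 1) (hpg : ∑ b, p b * g b ≤ (1 - δ) * m) :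
    δ ≤ ∑ b with g b ≤ m, p b := by
  rcases hm.eq_or_lt with rfl | hm
  · rw [mul_zero] at hpg
    have hterm := (Fintype.sum_eq_zero_iff_of_nonneg fun b => mul_nonneg (hp.1 b) (hg b)).1
      (hpg.antisymm (sum_nonneg fun b _ => mul_nonneg (hp.1 b) (hg b)))
    rw [sum_filter_of_ne fun b _ hb => ?_, hp.2]
    · exact hδ
    · exact ((mul_eq_zero.1 (congrFun hterm b)).resolve_left hb).le
  · have htail : m * ∑ b with ¬ g b ≤ m, p b ≤ (1 - δ) * m := by
      calc m * ∑ b with ¬ g b ≤ m, p b = ∑ b with ¬ g b ≤ m, p b * m := by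
            rw [← sum_mul, mul_comm]
        _ ≤ ∑ b with ¬ g b ≤ m, p b * g b := sum_le_sum fun b hb =>
            mul_le_mul_of_nonneg_left (not_le.1 (mem_filter.1 hb).2).le (hp.1 b)
        _ ≤ ∑ b, p b * g b := sum_le_sum_of_subset_of_nonneg (subset_univ _) fun b _ _ =>
            mul_nonneg (hp.1 b) (hg b)
        _ ≤ (1 - δ) * m := hpg
    have htotal := sum_filter_add_sum_filter_not univ (fun b => g b ≤ m) p
    rw [hp.2] at htotal
    linarith [le_of_mul_le_mul_left (htail.trans_eq (mul_comm _ _)) hm]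

/-- The distribution `p` contaminated by a point mass of weight `δ` at `c`; with `c` a letter of
minimal distortion, it gives random codewords a margin in the distortion constraint. -/
noncomputable def mixPoint [DecidableEq κ] (p : κ → ℝ) (c : κ) (δ : ℝ) : κ → ℝ :=
  (1 - δ) • p + δ • Pi.single c 1

section MixPoint

variable [DecidableEq κ] {p : κ → ℝ} {δ : ℝ}

lemma mixPoint_mem_stdSimplex (hp : p ∈ stdSimplex ℝ κ) (c : κ) (hδ0 : 0 ≤ δ) (hδ1 : δ ≤ 1) :
    mixPoint p c δ ∈ stdSimplex ℝ κ :=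
  convex_stdSimplex ℝ κ hp (single_mem_stdSimplex ℝ c) (sub_nonneg.2 hδ1) hδ0 (by ring)

lemma sum_mixPoint_mul (p : κ → ℝ) (c : κ) (δ : ℝ) (h : κ → ℝ) :
    ∑ b, mixPoint p c δ b * h b = (1 - δ) * ∑ b, p b * h b + δ * h c := by
  simp [mixPoint, add_mul, sum_add_distrib, mul_sum, mul_assoc, Pi.single_apply]

lemma klDivR_mixPoint_le {q : κ → ℝ} (hp : p ∈ stdSimplex ℝ κ) (hq : q ∈ stdSimplex ℝ κ)
    (hq0 : ∀ b, 0 < q b) {L : ℝ} (hL : ∀ b, |log (q b)| ≤ L) (c : κ) (hδ0 : 0 ≤ δ)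
    (hδ1 : δ ≤ 1) : klDivR (mixPoint p c δ) q ≤ klDivR p q + δ * L := by
  have hc := single_mem_stdSimplex ℝ c
  have hconv := (convexOn_klDivR hq0).2 hp.1 hc.1 (sub_nonneg.2 hδ1) hδ0 (by ring)
  simp only [smul_eq_mul] at hconv
  have hpos := mul_nonneg hδ0 (klDivR_nonneg hp hq fun b hb => ((hq0 b).ne' hb).elim)
  unfold mixPoint
  linarith [mul_le_mul_of_nonneg_left (klDivR_le_of_abs_log_le hc hq0 hL) hδ0]

-- Mixing with a minimiser of the cost shrinks the mean excess cost by the factor `1 - δ`, so by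
-- Markov's inequality a codeword within budget on average is within budget with probability `δ`.
lemma le_sum_filter_prod_mixPoint {ι : Type*} [Fintype ι] [DecidableEq ι] {v g : ι → κ → ℝ}
    (hv : ∀ i, v i ∈ stdSimplex ℝ κ) {m : ι → κ} (hm : ∀ i b, g i (m i) ≤ g i b) {B : ℝ}
    (hmB : ∑ i, g i (m i) ≤ B) (hvB : ∑ i, ∑ b, v i b * g i b ≤ B) (hδ0 : 0 ≤ δ) (hδ1 : δ ≤ 1) :
    δ ≤ ∑ y : ι → κ with ∑ i, g i (y i) ≤ B, ∏ i, mixPoint (v i) (m i) δ (y i) := by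
  have hmix (i : ι) := mixPoint_mem_stdSimplex (hv i) (m i) hδ0 hδ1
  have hmean : ∑ i, ∑ b, mixPoint (v i) (m i) δ b * (g i b - g i (m i)) =
      (1 - δ) * (∑ i, ∑ b, v i b * g i b - ∑ i, g i (m i)) := by
    rw [← sum_sub_distrib, mul_sum]
    refine sum_congr rfl fun i _ => ?_
    simp only [mul_sub, sum_sub_distrib, sum_mixPoint_mul, ← sum_mul, (hmix i).2]
    ring
  have hmarkov := le_sum_filter_of_sum_mul_le (prod_mem_stdSimplex hmix)
    (g := fun y => ∑ i, (g i (y i) - g i (m i)))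
    (fun y => sum_nonneg fun i _ => sub_nonneg.2 (hm i (y i))) (sub_nonneg.2 hmB) hδ1 ?_
  · simpa only [sum_sub_distrib, sub_le_sub_iff_right] using hmarkov
  · rw [sum_prod_mul_sum hmix fun i b => g i b - g i (m i), hmean]
    exact mul_le_mul_of_nonneg_left (sub_le_sub_right hvB _) (sub_nonneg.2 hδ1)

end MixPoint

variable {Q : κ → ℝ} {d : ι → κ → ℝ} {Δ : ℝ}

lemma ballProbN_eq_sum_filter (Q : κ → ℝ) (d : ι → κ → ℝ) (Δ : ℝ) {n : ℕ} (x : Fin n → ι) :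
    ballProbN Q d Δ x = ∑ y : Fin n → κ with ∑ i, d (x i) (y i) ≤ n * Δ, ∏ i, Q (y i) :=
  (sum_filter _ _).symm

lemma exists_le_exp_mul_ballProbN_add (hQ : Q ∈ stdSimplex ℝ κ) (hQ0 : ∀ b, 0 < Q b)
    (hΔ : ∀ a, ∃ b, d a b ≤ Δ) {ε : ℝ} (hε : 0 < ε) :
    ∃ δ > 0, ∃ s > 0, ∀ (n : ℕ) (x : Fin n → ι) (v : Fin n → κ → ℝ),
      (∀ i, v i ∈ stdSimplex ℝ κ) → ∑ i, ∑ b, v i b * d (x i) b ≤ n * Δ →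
      δ ≤ exp (∑ i, klDivR (v i) Q + n * ε) * ballProbN Q d Δ x + exp (-(s * n)) := by
  classical
  obtain ⟨L, hL⟩ := Finite.exists_le fun b => |log (Q b)|
  obtain ⟨δ, hδ, hδ1, hδL⟩ := exists_pos_mul_le_and_mul_le 1 L one_pos (half_pos hε)
  rw [mul_one] at hδ1
  obtain ⟨s, hs, hchange⟩ := exists_sum_prod_le_exp_mul_sum_prod_add hQ0 (half_pos hε)
  have exists_min (a : ι) : ∃ c, ∀ b, d a c ≤ d a b :=
    have : Nonempty κ := ⟨(hΔ a).choose⟩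
    Finite.exists_min (d a)
  choose m hm using exists_min
  refine ⟨δ, hδ, s, hs, fun n x v hv hvΔ => ?_⟩
  have hmΔ : ∑ i, d (x i) (m (x i)) ≤ n * Δ := by
    have hle (i : Fin n) : d (x i) (m (x i)) ≤ Δ := (hm _ _).trans (hΔ (x i)).choose_spec
    simpa using sum_le_sum fun i (_ : i ∈ univ) => hle i
  have hdiv : ∑ i, klDivR (mixPoint (v i) (m (x i)) δ) Q ≤ ∑ i, klDivR (v i) Q + n * (ε / 2) := by
    calc _ ≤ ∑ i, (klDivR (v i) Q + ε / 2) := sum_le_sum fun i _ =>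
          (klDivR_mixPoint_le (hv i) hQ hQ0 hL _ hδ.le hδ1).trans (by gcongr)
      _ = _ := by simp [sum_add_distrib]
  rw [ballProbN_eq_sum_filter]
  refine (le_sum_filter_prod_mixPoint hv (fun i => hm (x i)) hmΔ hvΔ hδ.le hδ1).trans <|
    (hchange n _ (fun i => mixPoint_mem_stdSimplex (hv i) _ hδ.le hδ1) _).trans ?_
  gcongr ?_ + _
  refine mul_le_mul_of_nonneg_right (exp_le_exp.2 (by linarith)) ?_
  exact sum_nonneg fun y _ => prod_nonneg fun i _ => (hQ0 _).le

lemma eventually_exp_neg_le_ballProbN (hQ : Q ∈ stdSimplex ℝ κ) (hQ0 : ∀ b, 0 < Q b)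
    (hΔ : ∀ a, ∃ b, d a b ≤ Δ) {ε : ℝ} (hε : 0 < ε) :
    ∀ᶠ n : ℕ in atTop, ∀ (x : Fin n → ι) (v : Fin n → κ → ℝ), (∀ i, v i ∈ stdSimplex ℝ κ) →
      ∑ i, ∑ b, v i b * d (x i) b ≤ n * Δ →
      exp (-(∑ i, klDivR (v i) Q + n * ε)) ≤ ballProbN Q d Δ x := by
  obtain ⟨δ, hδ, s, hs, hball⟩ := exists_le_exp_mul_ballProbN_add hQ hQ0 hΔ (half_pos hε)
  have eventually_exp_le {c : ℝ} (hc : 0 < c) : ∀ᶠ n : ℕ in atTop, exp (-(c * n)) ≤ δ / 2 :=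
    ((tendsto_exp_neg_atTop_nhds_zero.comp
      (tendsto_natCast_atTop_atTop.const_mul_atTop hc)).eventually_lt_const (half_pos hδ)).mono
      fun _ => le_of_lt
  filter_upwards [eventually_exp_le hs, eventually_exp_le (half_pos hε)] with n hns hnε x v hv hvΔ
  set D := ∑ i, klDivR (v i) Q
  have hexp : exp (-(ε / 2 * n)) ≤ exp (D + n * (ε / 2)) * ballProbN Q d Δ x := by
    linarith [hball n x v hv hvΔ]
  calc exp (-(D + n * ε)) = exp (-(D + n * (ε / 2))) * exp (-(ε / 2 * n)) := by
        rw [← exp_add]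
        congr 1
        ring
    _ ≤ exp (-(D + n * (ε / 2))) * (exp (D + n * (ε / 2)) * ballProbN Q d Δ x) := by gcongr
    _ = ballProbN Q d Δ x := by rw [← mul_assoc, ← exp_add, neg_add_cancel, exp_zero, one_mul]

lemma eventually_exp_neg_Rfun_le_ballProbN [Fintype ι] [DecidableEq ι] (hQ : Q ∈ stdSimplex ℝ κ)
    (hQ0 : ∀ b, 0 < Q b) (hΔ : ∀ a, ∃ b, d a b ≤ Δ) {ε : ℝ} (hε : 0 < ε) :
    ∀ᶠ n : ℕ in atTop, ∀ x : Fin n → ι,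
      exp (-(n * (Rfun (empDist x) Q d Δ + ε))) ≤ ballProbN Q d Δ x := by
  filter_upwards [eventually_exp_neg_le_ballProbN hQ hQ0 hΔ (half_pos hε), eventually_gt_atTop 0]
    with n hball hn x
  have hn0 : (0 : ℝ) < n := Nat.cast_pos.2 hn
  obtain ⟨V, ⟨hV, hVΔ⟩, hVR⟩ := exists_sum_mul_klDivR_lt (empDist_mem_stdSimplex hn.ne' x)
    (fun b => (hQ0 b).ne') hΔ (lt_add_of_pos_right (Rfun (empDist x) Q d Δ) (half_pos hε))
  rw [sum_empDist_mul x fun a => ∑ b, V a b * d a b, div_le_iff₀' hn0] at hVΔ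
  rw [sum_empDist_mul x fun a => klDivR (V a) Q, div_lt_iff₀' hn0] at hVR
  refine (exp_le_exp.2 ?_).trans
    (hball x (fun i => V (x i)) (fun i => isChannel_iff.1 hV (x i)) hVΔ)
  linarith

end Achievability

section Converse

variable {ι κ : Type*} [Fintype κ]

lemma exists_isChannel_mul_eq {J : ι → κ → ℝ} (hJ : ∀ a b, 0 ≤ J a b) {q : κ → ℝ}
    (hq : q ∈ stdSimplex ℝ κ) :
    ∃ V, IsChannel V ∧ ∀ a b, (∑ c, J a c) * V a b = J a b := by
  have exists_row (a : ι) : ∃ v ∈ stdSimplex ℝ κ, ∀ b, (∑ c, J a c) * v b = J a b := by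
    have hrow : 0 ≤ ∑ c, J a c := sum_nonneg fun c _ => hJ a c
    rcases hrow.eq_or_lt with h0 | hpos
    · have hzero := (Fintype.sum_eq_zero_iff_of_nonneg (hJ a)).1 h0.symm
      exact ⟨q, hq, fun b => by simp [congrFun hzero]⟩
    · refine ⟨fun b => J a b / ∑ c, J a c, ⟨fun b => div_nonneg (hJ a b) hrow, ?_⟩,
        fun b => mul_div_cancel₀ _ hpos.ne'⟩
      rw [← sum_div, div_self hpos.ne']
  choose V hV hmul using exists_row
  exact ⟨V, isChannel_iff.2 hV, hmul⟩

variable [Fintype ι] {n : ℕ}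

section JointType

variable [DecidableEq ι] [DecidableEq κ]

/-- The expected joint type of the input and the output when an i.i.d. sequence of law `p` is sent
through the `n`-letter channel `W`: its single-letterisation. -/
noncomputable def expectedJointType (p : ι → ℝ) (W : (Fin n → ι) → (Fin n → κ) → ℝ)
    (a : ι) (b : κ) : ℝ :=
  ∑ x, (∏ i, p (x i)) * ∑ y, W x y * empDist (fun i => (x i, y i)) (a, b)

variable {p : ι → ℝ} {W : (Fin n → ι) → (Fin n → κ) → ℝ}

lemma sum_expectedJointType_mul (h : ι → κ → ℝ) :
    ∑ a, ∑ b, expectedJointType p W a b * h a b =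
      (∑ x, (∏ i, p (x i)) * ∑ y, W x y * ∑ i, h (x i) (y i)) / n := by
  have htype (x : Fin n → ι) (y : Fin n → κ) : (∑ i, h (x i) (y i)) / n =
      ∑ z, empDist (fun i => (x i, y i)) z * h z.1 z.2 :=
    (sum_empDist_mul (fun i => (x i, y i)) fun z : ι × κ => h z.1 z.2).symm
  simp only [sum_div, mul_div_assoc, htype]
  simp only [expectedJointType, mul_sum, sum_mul, mul_assoc]
  rw [← Fintype.sum_prod_type', sum_comm]
  exact sum_congr rfl fun x _ => sum_comm

lemma expectedJointType_nonneg (hp : ∀ a, 0 ≤ p a) (hW : ∀ x y, 0 ≤ W x y) (a : ι) (b : κ) :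
    0 ≤ expectedJointType p W a b :=
  sum_nonneg fun x _ => mul_nonneg (prod_nonneg fun i _ => hp (x i)) <|
    sum_nonneg fun y _ => mul_nonneg (hW x y) (empDist_nonneg _ _)

lemma expectedJointType_pos (hp : ∀ a, 0 ≤ p a) (hW : ∀ x y, 0 ≤ W x y) {x : Fin n → ι}
    {y : Fin n → κ} (hx : 0 < ∏ i, p (x i)) (hy : 0 < W x y) (i : Fin n) :
    0 < expectedJointType p W (x i) (y i) := by
  have hterm (x' : Fin n → ι) (y' : Fin n → κ) :
      0 ≤ W x' y' * empDist (fun i => (x' i, y' i)) (x i, y i) :=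
    mul_nonneg (hW x' y') (empDist_nonneg _ _)
  refine sum_pos' (fun x' _ => mul_nonneg (prod_nonneg fun j _ => hp (x' j)) <|
    sum_nonneg fun y' _ => hterm x' y') ⟨x, mem_univ x, mul_pos hx ?_⟩
  exact sum_pos' (fun y' _ => hterm x y')
    ⟨y, mem_univ y, mul_pos hy (empDist_apply_pos (fun j => (x j, y j)) i)⟩

lemma sum_expectedJointType (hn : n ≠ 0) (hp : p ∈ stdSimplex ℝ ι)
    (hW : ∀ x, ∑ y, W x y = 1) (a : ι) : ∑ b, expectedJointType p W a b = p a := by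
  calc ∑ b, expectedJointType p W a b
      = ∑ a', ∑ b, expectedJointType p W a' b * if a' = a then 1 else 0 := by
        simp
    _ = (∑ x : Fin n → ι, (∏ i, p (x i)) * ∑ i, if x i = a then 1 else 0) / n := by
        rw [sum_expectedJointType_mul]
        simp only [← sum_mul, hW, one_mul]
    _ = p a := by
        rw [sum_prod_mul_sum (fun _ => hp) fun _ a' => if a' = a then (1 : ℝ) else 0]
        simp [hn]

end JointType

lemma mul_Rfun_le_sum_prod_mul_klDivR {p : ι → ℝ} {W : (Fin n → ι) → (Fin n → κ) → ℝ}
    {q : κ → ℝ} {d : ι → κ → ℝ} {Δ : ℝ} (hn : n ≠ 0) (hp : p ∈ stdSimplex ℝ ι)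
    (hq : q ∈ stdSimplex ℝ κ) (hq0 : ∀ b, 0 < q b) (hW : IsChannel W)
    (hWΔ : ∑ x, (∏ i, p (x i)) * ∑ y, W x y * ∑ i, d (x i) (y i) ≤ n * Δ) :
    n * Rfun p q d Δ ≤ ∑ x, (∏ i, p (x i)) * klDivR (W x) fun y => ∏ i, q (y i) := by
  classical
  have hn0 : (0 : ℝ) < n := Nat.cast_pos.2 hn.bot_lt
  obtain ⟨V, hV, hpV⟩ := exists_isChannel_mul_eq (expectedJointType_nonneg hp.1 hW.1) hq
  simp only [sum_expectedJointType hn hp hW.2] at hpV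
  have sum_channel_mul (h : ι → κ → ℝ) : ∑ a, p a * ∑ b, V a b * h a b =
      (∑ x, (∏ i, p (x i)) * ∑ y, W x y * ∑ i, h (x i) (y i)) / n := by
    rw [← sum_expectedJointType_mul]
    simp only [mul_sum, ← mul_assoc, hpV]
  have hVΔ : V ∈ feasibleChannels p d Δ :=
    ⟨hV, by rwa [sum_channel_mul, div_le_iff₀' hn0]⟩
  calc n * Rfun p q d Δ ≤ n * ∑ a, p a * klDivR (V a) q := by
        gcongr
        exact Rfun_le hp.1 hq (fun b => (hq0 b).ne') hVΔ
    _ = ∑ x, (∏ i, p (x i)) * ∑ y, W x y * ∑ i, log (V (x i) (y i) / q (y i)) := by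
        simp only [klDivR_eq_sum, sum_channel_mul fun a b => log (V a b / q b)]
        field_simp
    _ ≤ _ := sum_le_sum fun x _ => ?_
  have hpx : 0 ≤ ∏ i, p (x i) := prod_nonneg fun i _ => hp.1 (x i)
  rcases hpx.eq_or_lt with hx | hx
  · simp [← hx]
  · refine mul_le_mul_of_nonneg_left (sum_mul_sum_log_le_klDivR (isChannel_iff.1 hW x)
      (fun i => isChannel_iff.1 hV (x i)) (fun _ => hq0) fun y hy => ?_) hx.le
    obtain ⟨i, -, hi⟩ := prod_eq_zero_iff.1 hy
    by_contra hWxy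
    have hJ := expectedJointType_pos hp.1 hW.1 hx ((hW.1 x y).lt_of_ne' hWxy) i
    rw [← hpV, hi, mul_zero] at hJ
    exact hJ.false

end Converse

section CondDist

variable {κ : Type*} [DecidableEq κ]

/-- The distribution `q` conditioned on the event `A`; it is `0` when `A` has probability `0`. -/
noncomputable def condDist (q : κ → ℝ) (A : Finset κ) (b : κ) : ℝ :=
  if b ∈ A then q b / ∑ c ∈ A, q c else 0

variable [Fintype κ]

lemma condDist_mem_stdSimplex {q : κ → ℝ} {A : Finset κ} (hq : ∀ b, 0 ≤ q b)
    (hA : ∑ b ∈ A, q b ≠ 0) : condDist q A ∈ stdSimplex ℝ κ := by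
  refine ⟨fun b => ?_, ?_⟩
  · have := sum_nonneg fun c (_ : c ∈ A) => hq c
    have := hq b
    unfold condDist
    positivity
  · simp [condDist, ← sum_div, hA]

lemma klDivR_condDist {q : κ → ℝ} {A : Finset κ} (hq : ∀ b, 0 < q b) (hA : ∑ b ∈ A, q b ≠ 0) :
    klDivR (condDist q A) q = -log (∑ b ∈ A, q b) := by
  have hterm (b : κ) : condDist q A b * log (condDist q A b / q b) =
      condDist q A b * -log (∑ c ∈ A, q c) := by
    by_cases hb : b ∈ A
    · rw [condDist, if_pos hb, div_right_comm, div_self (hq b).ne', one_div, log_inv]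
    · simp [condDist, hb]
  rw [klDivR_eq_sum, sum_congr rfl fun b _ => hterm b, ← sum_mul,
    (condDist_mem_stdSimplex (fun b => (hq b).le) hA).2, one_mul]

end CondDist

section GeometricMoment

/-- The `ρ`-th moment of a geometric variable with success probability `q`, counting trials up to
and including the first success. -/
noncomputable def geomMoment (q : ℝ) (ρ : ℕ) : ℝ :=
  ∑' k : ℕ, ((k : ℝ) + 1) ^ ρ * ((1 - q) ^ k * q)

variable {q : ℝ}

lemma norm_one_sub_lt_one (hq0 : 0 < q) (hq1 : q ≤ 1) : ‖1 - q‖ < 1 := by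
  rw [norm_eq_abs, abs_lt]
  constructor <;> linarith

lemma hasSum_geom_prob (hq0 : 0 < q) (hq1 : q ≤ 1) :
    HasSum (fun k : ℕ => (1 - q) ^ k * q) 1 := by
  have h := (hasSum_geometric_of_norm_lt_one (norm_one_sub_lt_one hq0 hq1)).mul_right q
  rwa [sub_sub_cancel, inv_mul_cancel₀ hq0.ne'] at h

lemma hasSum_geom_mean (hq0 : 0 < q) (hq1 : q ≤ 1) :
    HasSum (fun k : ℕ => ((k : ℝ) + 1) * ((1 - q) ^ k * q)) q⁻¹ := by
  have h := ((hasSum_coe_mul_geometric_of_norm_lt_one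
    (norm_one_sub_lt_one hq0 hq1)).mul_right q).add (hasSum_geom_prob hq0 hq1)
  have hmean : (1 - q) / (1 - (1 - q)) ^ 2 * q + 1 = q⁻¹ := by
    rw [sub_sub_cancel]
    field_simp
    ring
  rw [hmean] at h
  exact h.congr_fun fun k => by ring

lemma hasSum_factorial_mul_choose (hq0 : 0 < q) (hq1 : q ≤ 1) (ρ : ℕ) :
    HasSum (fun k : ℕ => (ρ.factorial * (k + ρ).choose ρ : ℝ) * ((1 - q) ^ k * q))
      (ρ.factorial * q⁻¹ ^ ρ) := by
  have h := (hasSum_choose_mul_geometric_of_norm_lt_one ρ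
    (norm_one_sub_lt_one hq0 hq1)).mul_left (ρ.factorial * q)
  have hval : ρ.factorial * q * (1 / (1 - (1 - q)) ^ (ρ + 1)) = ρ.factorial * q⁻¹ ^ ρ := by
    rw [sub_sub_cancel, pow_succ, inv_pow]
    field_simp
  rw [hval] at h
  exact h.congr_fun fun k => by ring

lemma succ_pow_le_factorial_mul_choose (k ρ : ℕ) :
    ((k : ℝ) + 1) ^ ρ ≤ ρ.factorial * (k + ρ).choose ρ := by
  have h := Nat.pow_succ_le_ascFactorial (k + 1) ρ
  rw [Nat.ascFactorial_eq_factorial_mul_choose] at h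
  exact_mod_cast h

lemma summable_geomMoment (hq0 : 0 < q) (hq1 : q ≤ 1) (ρ : ℕ) :
    Summable fun k : ℕ => ((k : ℝ) + 1) ^ ρ * ((1 - q) ^ k * q) := by
  have := sub_nonneg.2 hq1
  exact (hasSum_factorial_mul_choose hq0 hq1 ρ).summable.of_nonneg_of_le (fun k => by positivity)
    fun k => mul_le_mul_of_nonneg_right (succ_pow_le_factorial_mul_choose k ρ) (by positivity)

lemma geomMoment_le (hq0 : 0 < q) (hq1 : q ≤ 1) (ρ : ℕ) :
    geomMoment q ρ ≤ ρ.factorial * q⁻¹ ^ ρ := by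
  have := sub_nonneg.2 hq1
  exact hasSum_le (fun k => mul_le_mul_of_nonneg_right (succ_pow_le_factorial_mul_choose k ρ)
    (by positivity)) (summable_geomMoment hq0 hq1 ρ).hasSum (hasSum_factorial_mul_choose hq0 hq1 ρ)

-- Jensen's inequality for `z ^ ρ`, through its tangent line (Bernoulli's inequality) at the mean
-- `1` of `z = q * (k + 1)`.
lemma inv_pow_le_geomMoment (hq0 : 0 < q) (hq1 : q ≤ 1) (ρ : ℕ) : q⁻¹ ^ ρ ≤ geomMoment q ρ := by
  have := sub_nonneg.2 hq1
  have htangent : HasSum (fun k : ℕ => (1 + ρ * (q * (k + 1) - 1)) * ((1 - q) ^ k * q)) 1 := by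
    have h := ((hasSum_geom_prob hq0 hq1).mul_left (1 - ρ : ℝ)).add
      ((hasSum_geom_mean hq0 hq1).mul_left (ρ * q))
    rw [mul_assoc, mul_inv_cancel₀ hq0.ne', mul_one, mul_one, sub_add_cancel] at h
    exact h.congr_fun fun k => by ring
  have bernoulli (k : ℕ) : 1 + ρ * (q * (k + 1) - 1) ≤ q ^ ρ * ((k : ℝ) + 1) ^ ρ := by
    have hz : 0 ≤ q * ((k : ℝ) + 1) := by positivity
    simpa [mul_pow] using one_add_mul_le_pow (a := q * (k + 1) - 1) (by linarith) ρ
  have hle : 1 ≤ q ^ ρ * geomMoment q ρ :=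
    hasSum_le (fun k => (mul_le_mul_of_nonneg_right (bernoulli k) (by positivity)).trans_eq
      (mul_assoc _ _ _)) htangent ((summable_geomMoment hq0 hq1 ρ).hasSum.mul_left (q ^ ρ))
  rwa [inv_pow, inv_le_iff_one_le_mul₀' (pow_pos hq0 ρ)]

end GeometricMoment

section BallProbability

variable {ι κ : Type*} [Fintype κ] {Q : κ → ℝ} {d : ι → κ → ℝ} {Δ : ℝ} {n : ℕ}

lemma ballProbN_pos (hQ0 : ∀ b, 0 < Q b) (hΔ : ∀ a, ∃ b, d a b ≤ Δ) (x : Fin n → ι) :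
    0 < ballProbN Q d Δ x := by
  choose f hf using hΔ
  rw [ballProbN_eq_sum_filter]
  refine sum_pos (fun y _ => prod_pos fun i _ => hQ0 (y i)) ⟨fun i => f (x i), ?_⟩
  simpa using sum_le_sum fun i (_ : i ∈ univ) => hf (x i)

lemma ballProbN_le_one (hQ : Q ∈ stdSimplex ℝ κ) (x : Fin n → ι) : ballProbN Q d Δ x ≤ 1 := by
  have hprod := prod_mem_stdSimplex fun _ : Fin n => hQ
  rw [ballProbN_eq_sum_filter, ← hprod.2]
  exact sum_le_sum_of_subset_of_nonneg (subset_univ _) fun y _ _ => hprod.1 y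

lemma geomMoment_ballProbN_le (hQ : Q ∈ stdSimplex ℝ κ) (hQ0 : ∀ b, 0 < Q b)
    (hΔ : ∀ a, ∃ b, d a b ≤ Δ) {n : ℕ} {x : Fin n → ι} {r : ℝ}
    (hball : exp (-r) ≤ ballProbN Q d Δ x) (ρ : ℕ) :
    geomMoment (ballProbN Q d Δ x) ρ ≤ ρ.factorial * exp (ρ * r) := by
  have hpos := ballProbN_pos hQ0 hΔ x
  refine (geomMoment_le hpos (ballProbN_le_one hQ x) ρ).trans ?_
  rw [exp_nat_mul]
  gcongr
  rwa [inv_le_comm₀ hpos (exp_pos _), ← exp_neg]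

-- Apply the single-letterisation to `W x`, the law of the codeword given that it lies in the
-- distortion ball of `x`: its divergence from `Q^{⊗n}` is `-log Q^{⊗n}(A_Δ(x))`.
lemma mul_Rfun_le_sum_prod_mul_neg_log_ballProbN [Fintype ι] {p : ι → ℝ} (hn : n ≠ 0)
    (hp : p ∈ stdSimplex ℝ ι) (hQ : Q ∈ stdSimplex ℝ κ) (hQ0 : ∀ b, 0 < Q b)
    (hΔ : ∀ a, ∃ b, d a b ≤ Δ) :
    n * Rfun p Q d Δ ≤ ∑ x : Fin n → ι, (∏ i, p (x i)) * -log (ballProbN Q d Δ x) := by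
  classical
  set μ : (Fin n → κ) → ℝ := fun y => ∏ i, Q (y i)
  have hμ0 (y : Fin n → κ) : 0 < μ y := prod_pos fun i _ => hQ0 (y i)
  set ball : (Fin n → ι) → Finset (Fin n → κ) := fun x => {y | ∑ i, d (x i) (y i) ≤ n * Δ}
  have hball (x : Fin n → ι) : ∑ y ∈ ball x, μ y = ballProbN Q d Δ x :=
    (ballProbN_eq_sum_filter Q d Δ x).symm
  have hball0 (x : Fin n → ι) : ∑ y ∈ ball x, μ y ≠ 0 :=
    (hball x).symm ▸ (ballProbN_pos hQ0 hΔ x).ne'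
  have hcond (x : Fin n → ι) : condDist μ (ball x) ∈ stdSimplex ℝ (Fin n → κ) :=
    condDist_mem_stdSimplex (fun y => (hμ0 y).le) (hball0 x)
  have hdist (x : Fin n → ι) : ∑ y, condDist μ (ball x) y * ∑ i, d (x i) (y i) ≤ n * Δ := by
    refine sum_mul_le_of_mem_stdSimplex (hcond x) fun y hy => ?_
    by_contra hlt
    exact hy (if_neg fun hmem : y ∈ ball x => hlt (mem_filter.1 hmem).2)
  refine (mul_Rfun_le_sum_prod_mul_klDivR hn hp hQ hQ0 (isChannel_iff.2 hcond) <|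
    sum_mul_le_of_mem_stdSimplex (prod_mem_stdSimplex fun _ => hp) fun x _ => hdist x).trans_eq ?_
  exact sum_congr rfl fun x _ => by rw [← hball, klDivR_condDist hμ0 (hball0 x)]

end BallProbability

section GuessingMoment

variable {ι κ : Type*} [Fintype ι] [Fintype κ] {P : ι → ℝ} {Q : κ → ℝ} {d : ι → κ → ℝ} {Δ : ℝ}

/-- The values `ρ R(Q_X, Q_{X̂} | Δ) - D(Q_X ‖ P_X)` whose supremum is the guessing exponent.
Here `Q_X` ranges over the distributions absolutely continuous with respect to `P_X`; for all
others `D(Q_X ‖ P_X)` is infinite, which `klDivR` does not record. -/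
def exponentValues (P : ι → ℝ) (Q : κ → ℝ) (d : ι → κ → ℝ) (Δ : ℝ) (ρ : ℕ) : Set ℝ :=
  {r | ∃ QX : ι → ℝ, (∀ a, 0 ≤ QX a) ∧ (∑ a, QX a = 1) ∧ (∀ a, P a = 0 → QX a = 0) ∧
    r = (ρ : ℝ) * Rfun QX Q d Δ - klDivR QX P}

lemma exponentValues_nonempty (hP : P ∈ stdSimplex ℝ ι) (Q : κ → ℝ) (d : ι → κ → ℝ) (Δ : ℝ)
    (ρ : ℕ) : (exponentValues P Q d Δ ρ).Nonempty :=
  ⟨_, P, hP.1, hP.2, fun _ => id, rfl⟩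

lemma bddAbove_exponentValues (hP : P ∈ stdSimplex ℝ ι) (hQ : Q ∈ stdSimplex ℝ κ)
    (hQ0 : ∀ b, 0 < Q b) (hΔ : ∀ a, ∃ b, d a b ≤ Δ) (ρ : ℕ) :
    BddAbove (exponentValues P Q d Δ ρ) := by
  obtain ⟨L, hL⟩ := Finite.exists_le fun b => |log (Q b)|
  refine ⟨ρ * L, ?_⟩
  rintro _ ⟨QX, h0, h1, hQXP, rfl⟩
  have hR := mul_le_mul_of_nonneg_left (Rfun_le_of_abs_log_le ⟨h0, h1⟩ hQ hQ0 hΔ hL) ρ.cast_nonneg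
  linarith [klDivR_nonneg ⟨h0, h1⟩ hP hQXP]

-- Change of measure from `P^{⊗n}` to `Q_X^{⊗n}` in `E[q_X^{-ρ}]`.
lemma exp_mul_le_guessMomentN (hP : ∀ a, 0 ≤ P a) (hQ : Q ∈ stdSimplex ℝ κ)
    (hQ0 : ∀ b, 0 < Q b) (hΔ : ∀ a, ∃ b, d a b ≤ Δ) {ρ : ℕ} {r : ℝ}
    (hr : r ∈ exponentValues P Q d Δ ρ) {n : ℕ} (hn : n ≠ 0) :
    exp (n * r) ≤ guessMomentN P Q d Δ ρ n := by
  obtain ⟨QX, h0, h1, hQXP, rfl⟩ := hr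
  have hQX : QX ∈ stdSimplex ℝ ι := ⟨h0, h1⟩
  let logBall (x : Fin n → ι) : ℝ := -log (ballProbN Q d Δ x)
  have habs (x : Fin n → ι) (hx : ∏ i, P (x i) = 0) : ∏ i, QX (x i) = 0 := by
    obtain ⟨i, hi, hPi⟩ := prod_eq_zero_iff.1 hx
    exact prod_eq_zero hi (hQXP _ hPi)
  calc exp (n * (ρ * Rfun QX Q d Δ - klDivR QX P))
      ≤ exp (∑ x : Fin n → ι, (∏ i, QX (x i)) * (ρ * logBall x) -
          klDivR (fun x : Fin n → ι => ∏ i, QX (x i)) fun x => ∏ i, P (x i)) := by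
        have hR := mul_le_mul_of_nonneg_left
          (mul_Rfun_le_sum_prod_mul_neg_log_ballProbN hn hQX hQ hQ0 hΔ) (ρ.cast_nonneg (α := ℝ))
        rw [klDivR_prod (fun _ => hQX) fun _ => hQXP, exp_le_exp]
        simp only [mul_left_comm _ (ρ : ℝ), ← mul_sum, sum_const, card_univ, Fintype.card_fin,
          nsmul_eq_mul]
        linarith
    _ ≤ ∑ x : Fin n → ι, (∏ i, P (x i)) * exp (ρ * logBall x) :=
        exp_sum_mul_sub_klDivR_le (prod_mem_stdSimplex fun _ => hQX)
          (fun x => prod_nonneg fun i _ => hP (x i)) habs _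
    _ ≤ guessMomentN P Q d Δ ρ n := sum_le_sum fun x _ =>
        mul_le_mul_of_nonneg_left ?_ (prod_nonneg fun i _ => hP (x i))
  have hball := ballProbN_pos hQ0 hΔ x
  simp only [logBall]
  rw [← log_inv, exp_nat_mul, exp_log (inv_pos.2 hball)]
  exact inv_pow_le_geomMoment hball (ballProbN_le_one hQ x) ρ

lemma prod_mul_exp_empDist_le [DecidableEq ι] (hP : ∀ a, 0 ≤ P a) {ρ : ℕ} {S : ℝ}
    (hS : S ∈ upperBounds (exponentValues P Q d Δ ρ)) {n : ℕ} (hn : n ≠ 0) (x : Fin n → ι) :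
    (∏ i, P (x i)) * exp (n * (ρ * Rfun (empDist x) Q d Δ)) ≤
      (∏ i, empDist x (x i)) * exp (n * S) := by
  have hprod : 0 ≤ ∏ i, empDist x (x i) := prod_nonneg fun i _ => empDist_nonneg x (x i)
  by_cases hx : ∃ i, P (x i) = 0
  · obtain ⟨i, hi⟩ := hx
    rw [prod_eq_zero (mem_univ i) hi, zero_mul]
    positivity
  · push Not at hx
    have hvalue : ρ * Rfun (empDist x) Q d Δ - klDivR (empDist x) P ∈ exponentValues P Q d Δ ρ :=
      have hemp := empDist_mem_stdSimplex hn x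
      ⟨_, hemp.1, hemp.2, fun a ha =>
        empDist_eq_zero_of_forall_ne fun i hi => hx i (hi ▸ ha), rfl⟩
    rw [prod_apply_eq_prod_empDist_mul_exp fun i => (hP (x i)).lt_of_ne' (hx i), mul_assoc,
      ← exp_add]
    gcongr
    linarith [mul_le_mul_of_nonneg_left (hS hvalue) n.cast_nonneg]

lemma eventually_mul_pow_le_exp (c : ℝ) (k : ℕ) {ε : ℝ} (hε : 0 < ε) :
    ∀ᶠ n : ℕ in atTop, c * ((n : ℝ) + 1) ^ k ≤ exp (n * ε) := by
  have hlittle := (isLittleO_pow_exp_pos_mul_atTop k hε).const_mul_left (c * exp ε)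
  have hshift : Tendsto (fun n : ℕ => (n : ℝ) + 1) atTop atTop :=
    tendsto_atTop_add_const_right _ _ tendsto_natCast_atTop_atTop
  filter_upwards [hshift.eventually (hlittle.bound one_pos)] with n hn
  rw [one_mul, norm_of_nonneg (exp_pos _).le] at hn
  have h := (le_norm_self _).trans hn
  rw [mul_add, mul_one, exp_add] at h
  rw [mul_comm (n : ℝ)]
  refine le_of_mul_le_mul_right ?_ (exp_pos ε)
  linarith

lemma eventually_guessMomentN_le (hP : ∀ a, 0 ≤ P a) (hQ : Q ∈ stdSimplex ℝ κ)
    (hQ0 : ∀ b, 0 < Q b) (hΔ : ∀ a, ∃ b, d a b ≤ Δ) {ρ : ℕ} {S : ℝ}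
    (hS : S ∈ upperBounds (exponentValues P Q d Δ ρ)) {ε : ℝ} (hε : 0 < ε) :
    ∀ᶠ n : ℕ in atTop, guessMomentN P Q d Δ ρ n ≤ exp (n * (S + ε)) := by
  classical
  obtain ⟨η, hη, hρη⟩ := exists_pos_mul_lt (half_pos hε) (ρ : ℝ)
  filter_upwards [eventually_exp_neg_Rfun_le_ballProbN hQ hQ0 hΔ hη,
    eventually_mul_pow_le_exp ρ.factorial (Fintype.card ι) (half_pos hε),
    eventually_ne_atTop 0] with n hball hpoly hn
  have hgeom (x : Fin n → ι) : geomMoment (ballProbN Q d Δ x) ρ ≤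
      ρ.factorial * exp (n * (ε / 2)) * exp (n * (ρ * Rfun (empDist x) Q d Δ)) := by
    refine (geomMoment_ballProbN_le hQ hQ0 hΔ (hball x) ρ).trans ?_
    rw [mul_assoc, ← exp_add]
    gcongr
    linarith [mul_le_mul_of_nonneg_left hρη.le n.cast_nonneg]
  calc guessMomentN P Q d Δ ρ n
      ≤ ∑ x : Fin n → ι, ρ.factorial * exp (n * (ε / 2)) *
          ((∏ i, P (x i)) * exp (n * (ρ * Rfun (empDist x) Q d Δ))) := sum_le_sum fun x _ =>
        (mul_le_mul_of_nonneg_left (hgeom x) (prod_nonneg fun i _ => hP (x i))).trans_eq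
          (mul_left_comm _ _ _)
    _ ≤ ∑ x : Fin n → ι, ρ.factorial * exp (n * (ε / 2)) *
          ((∏ i, empDist x (x i)) * exp (n * S)) := sum_le_sum fun x _ =>
        mul_le_mul_of_nonneg_left (prod_mul_exp_empDist_le hP hS hn x) (by positivity)
    _ = exp (n * (S + ε / 2)) * (ρ.factorial * ∑ x : Fin n → ι, ∏ i, empDist x (x i)) := by
        rw [← mul_sum, ← sum_mul, mul_add, exp_add]
        ring
    _ ≤ exp (n * (S + ε / 2)) * exp (n * (ε / 2)) := by
        gcongr
        refine le_trans ?_ hpoly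
        gcongr
        exact sum_prod_empDist_le hn
    _ = exp (n * (S + ε)) := by
        rw [← exp_add]
        congr 1
        ring

lemma tendsto_one_div_mul_log_of_isLUB {M : ℕ → ℝ} {s : Set ℝ} {S : ℝ} (hs : s.Nonempty)
    (hS : IsLUB s S) (hlower : ∀ r ∈ s, ∀ᶠ n : ℕ in atTop, exp (n * r) ≤ M n)
    (hupper : ∀ ε > 0, ∀ᶠ n : ℕ in atTop, M n ≤ exp (n * (S + ε))) :
    Tendsto (fun n : ℕ => 1 / (n : ℝ) * log (M n)) atTop (𝓝 S) := by
  refine tendsto_order.2 ⟨fun a ha => ?_, fun a ha => ?_⟩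
  · obtain ⟨r, hr, har, -⟩ := hS.exists_between ha
    filter_upwards [hlower r hr, eventually_gt_atTop 0] with n hn hn0
    have hlog := (le_log_iff_exp_le ((exp_pos _).trans_le hn)).2 hn
    rw [one_div_mul_eq_div, lt_div_iff₀ (Nat.cast_pos.2 hn0)]
    exact (mul_lt_mul_of_pos_right har (Nat.cast_pos.2 hn0)).trans_le (by linarith)
  · obtain ⟨r, hr⟩ := hs
    filter_upwards [hlower r hr, hupper ((a - S) / 2) (by linarith), eventually_gt_atTop 0]
      with n hlow hup hn0
    have hlog := (log_le_iff_le_exp ((exp_pos _).trans_le hlow)).2 hup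
    rw [one_div_mul_eq_div, div_lt_iff₀ (Nat.cast_pos.2 hn0)]
    have := mul_lt_mul_of_pos_right (show S + (a - S) / 2 < a by linarith) (Nat.cast_pos.2 hn0)
    linarith

end GuessingMoment

end Guessing

theorem iid_guessing_exponent_general {𝒳 𝒳' : Type*} [Fintype 𝒳] [Fintype 𝒳']
    (P : 𝒳 → ℝ) (hP0 : ∀ x, 0 ≤ P x) (hP1 : ∑ x, P x = 1)
    (Q : 𝒳' → ℝ) (hQpos : ∀ y, 0 < Q y) (hQ1 : ∑ y, Q y = 1)
    (d : 𝒳 → 𝒳' → ℝ) (Δ : ℝ) (hne : ∀ x, ∃ y, d x y ≤ Δ) (ρ : ℕ) :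
    Filter.Tendsto
      (fun n : ℕ => (1 / (n : ℝ)) * Real.log (guessMomentN P Q d Δ ρ n))
      Filter.atTop
      (nhds (sSup {r : ℝ | ∃ QX : 𝒳 → ℝ, (∀ a, 0 ≤ QX a) ∧ (∑ a, QX a = 1) ∧
        (∀ a, P a = 0 → QX a = 0) ∧
        r = (ρ : ℝ) * Rfun QX Q d Δ - klDivR QX P})) := by
  have hP : P ∈ stdSimplex ℝ 𝒳 := ⟨hP0, hP1⟩
  have hQ : Q ∈ stdSimplex ℝ 𝒳' := ⟨fun y => (hQpos y).le, hQ1⟩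
  have hnonempty := Guessing.exponentValues_nonempty hP Q d Δ ρ
  have hlub := isLUB_csSup hnonempty (Guessing.bddAbove_exponentValues hP hQ hQpos hne ρ)
  refine Guessing.tendsto_one_div_mul_log_of_isLUB hnonempty hlub (fun r hr => ?_) fun ε hε => ?_
  · filter_upwards [Filter.eventually_ne_atTop 0] with n hn
    exact Guessing.exp_mul_le_guessMomentN hP0 hQ hQpos hne hr hn
  · exact Guessing.eventually_guessMomentN_le hP0 hQ hQpos hne hlub.1 hε

/-- Asymptotic performance of i.i.d. asynchronous guessing strategies:
`lim_n (1/n) log E[G_ρ(X^n|Q^{⊗n})] = max_{Q_X} [ρ R(Q_X,Q_{X̂}|Δ) − D(Q_X‖P_X)]`. -/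
theorem iid_guessing_exponent {𝒳 𝒳' : Type*} [Fintype 𝒳] [Fintype 𝒳']
    (P : 𝒳 → ℝ) (hP0 : ∀ x, 0 ≤ P x) (hP1 : ∑ x, P x = 1)
    (Q : 𝒳' → ℝ) (hQpos : ∀ y, 0 < Q y) (hQ1 : ∑ y, Q y = 1)
    (d : 𝒳 → 𝒳' → ℝ) (hd : ∀ x y, 0 ≤ d x y) (Δ : ℝ) (hΔ : 0 ≤ Δ)
    (hne : ∀ x, ∃ y, d x y ≤ Δ) (ρ : ℕ) (hρ : 0 < ρ) :
    Filter.Tendsto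
      (fun n : ℕ => (1 / (n : ℝ)) * Real.log (guessMomentN P Q d Δ ρ n))
      Filter.atTop
      (nhds (sSup {r : ℝ | ∃ QX : 𝒳 → ℝ, (∀ a, 0 ≤ QX a) ∧ (∑ a, QX a = 1) ∧
        (∀ a, P a = 0 → QX a = 0) ∧
        r = (ρ : ℝ) * Rfun QX Q d Δ - klDivR QX P})) :=
  iid_guessing_exponent_general P hP0 hP1 Q hQpos hQ1 d Δ hne ρ
end
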